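/- arXiv:2306.17448 — 9 statements merged into one kernel-verified Lean document; each statement's English description precedes it below -/
import Mathlib

section
/- There exist a bounded function w : ℕ×E → ℝ with w(k,·) continuous for every k ∈ ℕ, and a function λ : ℕ → ℝ, solving the discounted Bellman equation: for all k ∈ ℕ and x ∈ E, w(k,x) = min( φ_h(k)·(g(x) − λ(k)) + ∫_E w(k+1,y) P(x,dy), inf_{ξ∈U} ( φ_h(k)·(1/h)·c(x,ξ) + w(k,ξ) ) ). -/
/-! The equation at time `k` only links `w k` to `w (k+1)`, and it can be solved explicitly for `w k`.
Put `a = φ_k g + P w_{k+1}` and let `switch a x = min (a x) (inf_ξ (κ x ξ + a ξ))` with the impulse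
cost `κ = φ_k c / h`. By the triangle inequality for `κ` two successive impulses are never better
than one, so `switch a` satisfies `v = min a (inf_ξ (κ · ξ + v ξ))` (`switch_fixed`), and so does
`switch a - s` with `a - s` in place of `a`, for each constant `s`. Hence it suffices to find a bounded
continuous `w` with `w_k = switch a - switch a x₀` for a base point `x₀`, after which
`λ_k = switch a x₀ / φ_k`.

Such a `w` is a fixed point of an operator on bounded continuous functions on `ℕ × E`. `switch` does
not increase the oscillation of differences (`switch_osc`), and `P` multiplies oscillations by at most
`Λ` (`integral_osc`, from the Doeblin condition through the layer cake formula). Since the operator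
produces functions vanishing at `x₀`, whose sup norm is at most their oscillation, its `n`-th iterate
is Lipschitz with constant `2 Λ ^ n`, and a high iterate is a contraction. -/

open MeasureTheory Set Filter

noncomputable def phih (β : ℝ → ℝ) (h : ℝ) (i : ℕ) : ℝ :=
  (1 / h) * ∫ s in ((i : ℝ) * h)..(((i : ℝ) + 1) * h), β s

/-! ### The one-step impulse operator -/

/-- The minimal cost from `x` when at most one impulse is allowed: either continue at cost `a x`, or
pay `κ x ξ` to move to some `ξ ∈ U` and continue from there at cost `a ξ`. -/
noncomputable def switch {E : Type*} (U : Set E) (κ : E → E → ℝ) (a : E → ℝ) (x : E) : ℝ :=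
  min (a x) (⨅ ξ : U, (κ x ξ + a ξ))

section Switch

variable {E : Type*} {U : Set E} {κ : E → E → ℝ} {a b : E → ℝ}

lemma bddBelow_cost (hκ : ∀ x, ∀ ξ ∈ U, 0 ≤ κ x ξ) (ha : ∃ m, ∀ x, m ≤ a x) (x : E) :
    BddBelow (range fun ξ : U => κ x ξ + a ξ) := by
  obtain ⟨m, hm⟩ := ha
  refine ⟨m, ?_⟩
  rintro _ ⟨ξ, rfl⟩
  have h1 := hκ x ξ ξ.2
  have h2 := hm ξ
  simp only
  linarith

lemma switch_le_self (x : E) : switch U κ a x ≤ a x := min_le_left _ _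

lemma switch_le_cost (hκ : ∀ x, ∀ ξ ∈ U, 0 ≤ κ x ξ) (ha : ∃ m, ∀ x, m ≤ a x) (x : E)
    {ξ : E} (hξ : ξ ∈ U) : switch U κ a x ≤ κ x ξ + a ξ :=
  (min_le_right _ _).trans (ciInf_le (bddBelow_cost hκ ha x) ⟨ξ, hξ⟩)

lemma le_switch (hU : U.Nonempty) {x : E} {r : ℝ} (h1 : r ≤ a x)
    (h2 : ∀ ξ ∈ U, r ≤ κ x ξ + a ξ) : r ≤ switch U κ a x := by
  have := hU.to_subtype
  exact le_min h1 (le_ciInf fun ξ => h2 ξ ξ.2)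

lemma switch_lower (hU : U.Nonempty) (hκ : ∀ x, ∀ ξ ∈ U, 0 ≤ κ x ξ) {m : ℝ}
    (ha : ∀ x, m ≤ a x) (x : E) : m ≤ switch U κ a x :=
  le_switch hU (ha x) fun ξ hξ => by linarith [hκ x ξ hξ, ha ξ]

lemma switch_mono_add (hU : U.Nonempty) (hκ : ∀ x, ∀ ξ ∈ U, 0 ≤ κ x ξ)
    (hb : ∃ m, ∀ x, m ≤ b x) {e : ℝ} (h : ∀ z, b z + e ≤ a z) (x : E) :
    switch U κ b x + e ≤ switch U κ a x := by
  refine le_switch hU ?_ fun ξ hξ => ?_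
  · linarith [switch_le_self (U := U) (κ := κ) (a := b) x, h x]
  · linarith [switch_le_cost hκ hb x hξ, h ξ]

/-- `switch` does not increase the oscillation of the difference of two functions: it is monotone
and commutes with the addition of constants. -/
lemma switch_osc (hU : U.Nonempty) (hκ : ∀ x, ∀ ξ ∈ U, 0 ≤ κ x ξ)
    (ha : ∃ m, ∀ x, m ≤ a x) (hb : ∃ m, ∀ x, m ≤ b x) {D : ℝ}
    (h : ∀ z z', (a z - b z) - (a z' - b z') ≤ D) (x y : E) :
    (switch U κ a x - switch U κ b x) - (switch U κ a y - switch U κ b y) ≤ D := by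
  have h1 : ∀ z, switch U κ b y + (a z - b z - D) ≤ switch U κ a y := fun z =>
    switch_mono_add hU hκ hb (fun z' => by linarith [h z z']) y
  have h2 := switch_mono_add (a := b) (b := a) hU hκ ha
    (e := -(switch U κ a y - switch U κ b y + D)) (fun z => by linarith [h1 z]) x
  linarith

/-- By the triangle inequality for `κ`, a second impulse brings no gain, so `switch` turns `a` into
a solution of the one-step equation; a constant shift `s` is carried along. -/
lemma switch_fixed (hU : U.Nonempty) (hκ : ∀ x, ∀ ξ ∈ U, 0 ≤ κ x ξ)
    (htri : ∀ x, ∀ ξ ∈ U, ∀ η ∈ U, κ x ξ ≤ κ x η + κ η ξ)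
    (ha : ∃ m, ∀ x, m ≤ a x) (s : ℝ) (x : E) :
    switch U κ a x - s =
      min (a x - s) (⨅ ξ : U, (κ x ξ + (switch U κ a ξ - s))) := by
  have := hU.to_subtype
  apply le_antisymm
  · refine le_min (by linarith [switch_le_self (U := U) (κ := κ) (a := a) x])
      (le_ciInf fun ξ => ?_)
    have : switch U κ a x - κ x ξ ≤ switch U κ a ξ := by
      refine le_switch hU ?_ fun η hη => ?_
      · linarith [switch_le_cost hκ ha x ξ.2]
      · linarith [switch_le_cost hκ ha x hη, htri x η hη ξ ξ.2]
    linarith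
  · have key : min (a x - s) (⨅ ξ : U, (κ x ξ + (switch U κ a ξ - s))) + s
        ≤ switch U κ a x := by
      have h0 := min_le_left (a x - s) (⨅ ξ : U, (κ x ξ + (switch U κ a ξ - s)))
      refine le_switch hU (by linarith) fun ξ hξ => ?_
      obtain ⟨m, hm⟩ := ha
      have hb := bddBelow_cost (a := fun ξ => switch U κ a ξ - s) hκ
        ⟨m - s, fun x => by linarith [switch_lower hU hκ hm x]⟩ x
      have h1 := (min_le_right (a x - s) _).trans (ciInf_le hb ⟨ξ, hξ⟩)
      have h2 := switch_le_self (U := U) (κ := κ) (a := a) ξ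
      simp only at h1
      linarith
    linarith

lemma continuous_switch [TopologicalSpace E] (hU : IsCompact U)
    (hκ : Continuous fun p : E × E => κ p.1 p.2) (ha : Continuous a) :
    Continuous (switch U κ a) := by
  have h1 : Continuous fun x => sInf ((fun ξ => κ x ξ + a ξ) '' U) := by
    refine hU.continuous_sInf (f := fun x ξ => κ x ξ + a ξ) ?_
    exact hκ.add (ha.comp continuous_snd)
  simp only [sInf_image'] at h1
  exact ha.min h1

end Switch

/-! ### The discount function and the Doeblin condition -/

lemma phih_pos_le {β : ℝ → ℝ} (hβcont : ContinuousOn β (Set.Ici 0))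
    (hβval : ∀ t, 0 ≤ t → β t ∈ Set.Ioc (0:ℝ) 1) {h : ℝ} (hh : 0 < h) (k : ℕ) :
    0 < phih β h k ∧ phih β h k ≤ 1 := by
  have hk : 0 ≤ (k : ℝ) * h := by positivity
  have hlt : (k : ℝ) * h < ((k : ℝ) + 1) * h := by linarith
  have hint : IntervalIntegrable β volume ((k : ℝ) * h) (((k : ℝ) + 1) * h) := by
    refine (hβcont.mono fun t ht => ?_).intervalIntegrable
    rw [uIcc_of_le hlt.le] at ht
    exact hk.trans ht.1
  constructor
  · refine mul_pos (by positivity) ?_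
    exact intervalIntegral.intervalIntegral_pos_of_pos_on hint
      (fun t ht => (hβval t (hk.trans ht.1.le)).1) hlt
  · have h1 : ∫ s in ((k : ℝ) * h)..(((k : ℝ) + 1) * h), β s
        ≤ ∫ s in ((k : ℝ) * h)..(((k : ℝ) + 1) * h), (1 : ℝ) :=
      intervalIntegral.integral_mono_on hlt.le hint intervalIntegrable_const
        fun t ht => (hβval t (hk.trans ht.1)).2
    simp only [intervalIntegral.integral_const, smul_eq_mul] at h1
    unfold phih
    rw [one_div, inv_mul_le_iff₀ hh]
    linarith

/-- If two probability measures differ by at most `Λ` on every measurable set, the integrals of `f`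
differ by at most `Λ` times the oscillation of `f`: integrate the bound over the superlevel sets. -/
lemma integral_osc {E : Type*} [MeasurableSpace E] (μ ν : Measure E) [IsProbabilityMeasure μ]
    [IsProbabilityMeasure ν] {Λ : ℝ}
    (hD : ∀ A : Set E, MeasurableSet A → |(μ A).toReal - (ν A).toReal| ≤ Λ)
    {f : E → ℝ} (hf : Measurable f) {D : ℝ} (hosc : ∀ x y, f x - f y ≤ D) :
    ∫ y, f y ∂μ - ∫ y, f y ∂ν ≤ Λ * D := by
  obtain ⟨z⟩ : Nonempty E := nonempty_of_isProbabilityMeasure μ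
  have : Nonempty E := ⟨z⟩
  have hD0 : 0 ≤ D := by simpa using hosc z z
  have hbdd : BddBelow (range f) := ⟨f z - D, by
    rintro _ ⟨y, rfl⟩
    linarith [hosc z y]⟩
  set m := ⨅ y, f y with hm
  have hm1 : ∀ y, 0 ≤ f y - m := fun y => sub_nonneg.2 (ciInf_le hbdd y)
  have hm2 : ∀ y, f y - m ≤ D := fun y => by
    have : f y - D ≤ m := le_ciInf fun y' => by linarith [hosc y y']
    linarith
  have hint : ∀ ρ : Measure E, IsProbabilityMeasure ρ → Integrable (fun y => f y - m) ρ := by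
    intro ρ _
    refine Integrable.of_bound (hf.sub_const m).aestronglyMeasurable D (ae_of_all _ fun y => ?_)
    rw [Real.norm_eq_abs, abs_of_nonneg (hm1 y)]
    exact hm2 y
  have hlayer : ∀ ρ : Measure E, IsProbabilityMeasure ρ →
      ∫ y, f y ∂ρ - m = ∫ t in Ioc 0 D, ρ.real {y | t ≤ f y - m} := by
    intro ρ hρ
    rw [← Integrable.integral_eq_integral_Ioc_meas_le (hint ρ hρ)
      (ae_of_all _ hm1) (ae_of_all _ hm2)]
    have hfi : Integrable f ρ := by
      refine ((hint ρ hρ).add (integrable_const m)).congr (ae_of_all _ fun y => ?_)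
      simp
    rw [integral_sub hfi (integrable_const m)]
    simp
  have hlevel : ∀ ρ : Measure E, IsProbabilityMeasure ρ →
      IntegrableOn (fun t => ρ.real {y | t ≤ f y - m}) (Ioc 0 D) := by
    intro ρ _
    have hanti : Antitone (fun t => ρ.real {y | t ≤ f y - m}) := fun s t hst =>
      measureReal_mono fun y (hy : t ≤ f y - m) => hst.trans hy
    exact (intervalIntegrable_iff_integrableOn_Ioc_of_le hD0).1 hanti.intervalIntegrable
  have hdiff : ∫ y, f y ∂μ - ∫ y, f y ∂ν
      = ∫ t in Ioc 0 D, (μ.real {y | t ≤ f y - m} - ν.real {y | t ≤ f y - m}) := by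
    rw [integral_sub (hlevel μ inferInstance) (hlevel ν inferInstance),
      ← hlayer μ inferInstance, ← hlayer ν inferInstance]
    ring
  rw [hdiff]
  calc _ ≤ ∫ t in Ioc 0 D, Λ := by
        refine integral_mono ((hlevel μ inferInstance).sub (hlevel ν inferInstance))
          (integrable_const _) fun t => ?_
        exact (abs_le.1 (hD _ (measurableSet_le measurable_const (hf.sub_const m)))).2
    _ = Λ * D := by simp [hD0, mul_comm]

/-! ### The fixed point -/

open BoundedContinuousFunction in
/-- A self-map of bounded continuous functions on `ℕ × E` whose values vanish at `x₀` and which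
contracts the oscillation in the second variable has a fixed point. The map itself is only Lipschitz
with constant `2 Λ` in sup norm, so the contraction principle is applied to an iterate. -/
lemma exists_fixed {E : Type*} [TopologicalSpace E] (x₀ : E) {Λ : ℝ} (hΛ : Λ ∈ Set.Ioo (0:ℝ) 1)
    (Φ : ((ℕ × E) →ᵇ ℝ) → ((ℕ × E) →ᵇ ℝ)) (h0 : ∀ w k, Φ w (k, x₀) = 0)
    (hΦ : ∀ w u D, (∀ k x y, (w (k, x) - u (k, x)) - (w (k, y) - u (k, y)) ≤ D) →
      ∀ k x y, (Φ w (k, x) - Φ u (k, x)) - (Φ w (k, y) - Φ u (k, y)) ≤ Λ * D) :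
    ∃ w, Φ w = w := by
  have hiter : ∀ n w u D, (∀ k x y, (w (k, x) - u (k, x)) - (w (k, y) - u (k, y)) ≤ D) →
      ∀ k x y, (Φ^[n] w (k, x) - Φ^[n] u (k, x)) - (Φ^[n] w (k, y) - Φ^[n] u (k, y))
        ≤ Λ ^ n * D := by
    intro n w u D h
    induction n with
    | zero => simpa using h
    | succ n ih =>
      simp only [Function.iterate_succ_apply']
      intro k x y
      have := hΦ _ _ _ ih k x y
      rw [pow_succ']
      linarith
  obtain ⟨n, hn⟩ := exists_pow_lt_of_lt_one (show (0:ℝ) < 1 / 2 by norm_num) hΛ.2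
  have hΛn : Λ ^ (n + 1) < 1 / 2 := by
    rw [pow_succ]
    nlinarith [pow_pos hΛ.1 n, hΛ.2]
  have hpos : 0 < Λ ^ (n + 1) := pow_pos hΛ.1 _
  obtain ⟨K, hK⟩ : ∃ K : NNReal, (K : ℝ) = Λ ^ (n + 1) * 2 :=
    ⟨⟨Λ ^ (n + 1) * 2, by positivity⟩, rfl⟩
  have hc : ContractingWith K Φ^[n + 1] := by
    refine ⟨by rw [← NNReal.coe_lt_coe, hK, NNReal.coe_one]; linarith,
      LipschitzWith.of_dist_le_mul fun w u => ?_⟩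
    have hosc : ∀ k x y, (w (k, x) - u (k, x)) - (w (k, y) - u (k, y)) ≤ 2 * dist w u := by
      intro k x y
      have h1 := abs_le.1 (dist_coe_le_dist (f := w) (g := u) (k, x))
      have h2 := abs_le.1 (dist_coe_le_dist (f := w) (g := u) (k, y))
      linarith [h1.2, h2.1]
    have hz : ∀ v k, Φ^[n + 1] v (k, x₀) = 0 := fun v k => by
      rw [Function.iterate_succ_apply']
      exact h0 _ _
    rw [hK]
    refine (dist_le (by positivity)).2 ?_
    rintro ⟨k, x⟩
    have h1 := hiter (n + 1) w u _ hosc k x x₀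
    have h2 := hiter (n + 1) w u _ hosc k x₀ x
    simp only [hz] at h1 h2
    rw [Real.dist_eq, abs_le]
    constructor <;> linarith
  exact ⟨_, hc.isFixedPt_fixedPoint_iterate⟩

theorem stmt0
    {E : Type*} [MetricSpace E] [LocallyCompactSpace E]
    [TopologicalSpace.SeparableSpace E] [MeasurableSpace E] [BorelSpace E]
    (U : Set E) (hUne : U.Nonempty) (hUcomp : IsCompact U)
    (P : ProbabilityTheory.Kernel E E) [ProbabilityTheory.IsMarkovKernel P]
    (hFeller : ∀ f : E → ℝ, Continuous f → (∃ M, ∀ x, |f x| ≤ M) →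
      Continuous fun x => ∫ y, f y ∂ P x)
    (Λ : ℝ) (hΛ : Λ ∈ Set.Ioo (0:ℝ) 1)
    (hDoeblin : ∀ x y : E, ∀ A : Set E, MeasurableSet A →
      |(P x A).toReal - (P y A).toReal| ≤ Λ)
    (g : E → ℝ) (hgc : Continuous g) (hgb : ∃ M, ∀ x, |g x| ≤ M)
    (c : E → E → ℝ) (hcc : Continuous fun p : E × E => c p.1 p.2)
    (hcb : ∃ M, ∀ x ξ, |c x ξ| ≤ M)
    (c₀ : ℝ) (hc₀ : 0 < c₀)
    (hclb : ∀ x : E, ∀ ξ ∈ U, c₀ ≤ c x ξ)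
    (hctri : ∀ x : E, ∀ ξ ∈ U, ∀ η ∈ U, c x ξ ≤ c x η + c η ξ)
    (β : ℝ → ℝ)
    (hβcont : ContinuousOn β (Set.Ici 0))
    (hβmono : AntitoneOn β (Set.Ici 0))
    (hβval : ∀ t, 0 ≤ t → β t ∈ Set.Ioc (0:ℝ) 1)
    (hβ0 : β 0 = 1)
    (hβsup : ∀ t s, 0 ≤ t → 0 ≤ s → β t * β s ≤ β (t + s))
    (hβdiv : ¬ IntegrableOn β (Set.Ici 0) volume)
    (h : ℝ) (hh : 0 < h) :
    ∃ (w : ℕ → E → ℝ) (lam : ℕ → ℝ),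
      (∃ C, ∀ (k : ℕ) (x : E), |w k x| ≤ C) ∧
      (∀ k : ℕ, Continuous (w k)) ∧
      ∀ (k : ℕ) (x : E),
        w k x = min
          (phih β h k * (g x - lam k) + ∫ y, w (k + 1) y ∂ P x)
          (⨅ ξ : U, (phih β h k * ((1 / h) * c x ξ) + w k ξ)) := by
  obtain ⟨x₀, hx₀⟩ := hUne
  have hU : U.Nonempty := ⟨x₀, hx₀⟩
  obtain ⟨G, hG⟩ := hgb
  have hφ := phih_pos_le hβcont hβval hh
  set κ : ℕ → E → E → ℝ := fun k x ξ => phih β h k * ((1 / h) * c x ξ) with hκdef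
  have hcoef : ∀ k, 0 < phih β h k * (1 / h) := fun k => mul_pos (hφ k).1 (by positivity)
  have hκ0 : ∀ k x, ∀ ξ ∈ U, 0 ≤ κ k x ξ := fun k x ξ hξ =>
    mul_nonneg (hφ k).1.le (mul_nonneg (by positivity) (hc₀.le.trans (hclb x ξ hξ)))
  have hκtri : ∀ k x, ∀ ξ ∈ U, ∀ η ∈ U, κ k x ξ ≤ κ k x η + κ k η ξ := by
    intro k x ξ hξ η hη
    have := mul_le_mul_of_nonneg_left (hctri x ξ hξ η hη) (hcoef k).le
    simp only [hκdef]
    linarith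
  have hκc : ∀ k, Continuous fun p : E × E => κ k p.1 p.2 := fun k =>
    (hcc.const_mul (1 / h)).const_mul (phih β h k)
  -- the cost of letting the system run for one step, without the normalising constant
  let a : (BoundedContinuousFunction (ℕ × E) ℝ) → ℕ → E → ℝ := fun w k x =>
    phih β h k * g x + ∫ y, w (k + 1, y) ∂ P x
  have hwc : ∀ (w : BoundedContinuousFunction (ℕ × E) ℝ) k, Continuous fun y => w (k, y) := fun w k =>
    w.continuous.comp (by fun_prop)
  have hwb : ∀ (w : BoundedContinuousFunction (ℕ × E) ℝ) k y, |w (k, y)| ≤ ‖w‖ := fun w k y => w.norm_coe_le_norm _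
  have hac : ∀ w k, Continuous (a w k) := fun w k =>
    (hgc.const_mul _).add (hFeller _ (hwc w (k + 1)) ⟨‖w‖, hwb w (k + 1)⟩)
  have hab : ∀ w k x, |a w k x| ≤ G + ‖w‖ := by
    intro w k x
    have h1 : |∫ y, w (k + 1, y) ∂ P x| ≤ ‖w‖ := by
      simpa using norm_integral_le_of_norm_le_const (μ := P x) (f := fun y => w (k + 1, y))
        (C := ‖w‖) (ae_of_all _ fun y => hwb w (k + 1) y)
    have h2 : |phih β h k * g x| ≤ G := by
      rw [abs_mul, abs_of_pos (hφ k).1]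
      have := mul_le_mul_of_nonneg_right (hφ k).2 (abs_nonneg (g x))
      linarith [hG x]
    exact (abs_add_le _ _).trans (add_le_add h2 h1)
  have hal : ∀ w k, ∃ m, ∀ x, m ≤ a w k x := fun w k =>
    ⟨-(G + ‖w‖), fun x => (abs_le.1 (hab w k x)).1⟩
  have hsb : ∀ w k x, |switch U (κ k) (a w k) x| ≤ G + ‖w‖ := fun w k x =>
    abs_le.2 ⟨switch_lower hU (hκ0 k) (fun y => (abs_le.1 (hab w k y)).1) x,
      (switch_le_self x).trans (abs_le.1 (hab w k x)).2⟩
  let Φ : (BoundedContinuousFunction (ℕ × E) ℝ) → (BoundedContinuousFunction (ℕ × E) ℝ) := fun w =>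
    BoundedContinuousFunction.ofNormedAddCommGroup
      (fun p => switch U (κ p.1) (a w p.1) p.2 - switch U (κ p.1) (a w p.1) x₀)
      (by
        refine continuous_prod_of_discrete_left.2 fun k => ?_
        exact (continuous_switch hUcomp (hκc k) (hac w k)).sub
          (continuous_const (y := switch U (κ k) (a w k) x₀)))
      ((G + ‖w‖) + (G + ‖w‖))
      (fun p => (abs_sub _ _).trans (add_le_add (hsb w p.1 p.2) (hsb w p.1 x₀)))
  have hΦ : ∀ w k x, Φ w (k, x) =
    switch U (κ k) (a w k) x - switch U (κ k) (a w k) x₀ := fun _ _ _ => rfl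
  obtain ⟨w, hw⟩ := exists_fixed x₀ hΛ Φ (fun w k => by rw [hΦ, sub_self]) (by
    intro w u D hD k x y
    have hwu := switch_osc (a := a w k) (b := a u k) (D := Λ * D) hU (hκ0 k) (hal w k) (hal u k)
      (by
        intro z z'
        have hi : ∀ (v : BoundedContinuousFunction (ℕ × E) ℝ) z, Integrable (fun y => v (k + 1, y)) (P z) := fun v z =>
          Integrable.of_bound (hwc v (k + 1)).aestronglyMeasurable ‖v‖
            (ae_of_all _ fun y => hwb v (k + 1) y)
        have := integral_osc (P z) (P z') (hDoeblin z z')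
          ((hwc w (k + 1)).sub (hwc u (k + 1))).measurable (hD (k + 1))
        simp only [Pi.sub_apply] at this
        rw [integral_sub (hi w z) (hi u z), integral_sub (hi w z') (hi u z')] at this
        simp only [a]
        linarith) x y
    simp only [hΦ]
    linarith)
  refine ⟨fun k x => w (k, x), fun k => switch U (κ k) (a w k) x₀ / phih β h k,
    ⟨‖w‖, hwb w⟩, hwc w, fun k x => ?_⟩
  have hwk : ∀ x, w (k, x) = switch U (κ k) (a w k) x - switch U (κ k) (a w k) x₀ := fun x => by
    rw [← hΦ, hw]
  have hfix := switch_fixed hU (hκ0 k) (hκtri k) (hal w k) (switch U (κ k) (a w k) x₀) x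
  have hlam : phih β h k * (g x - switch U (κ k) (a w k) x₀ / phih β h k)
      + ∫ y, w (k + 1, y) ∂ P x = a w k x - switch U (κ k) (a w k) x₀ := by
    rw [mul_sub, mul_div_cancel₀ _ (hφ k).1.ne']
    simp only [a]
    ring
  simp only [← hwk] at hfix
  rw [hlam]
  exact hfix
end

section
/- There exist a bounded continuous function w : E → ℝ and a constant λ ∈ ℝ solving the undiscounted Bellman equation: for all x ∈ E, w(x) = min( g(x) − λ + ∫_E w(y) P(x,dy), inf_{ξ∈U} ( (1/h)·c(x,ξ) + w(ξ) ) ). -/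
/-!
Write `k = c / h`. By the triangle inequality for the impulse costs, two successive impulses are
never cheaper than one, so the impulse term may be evaluated at the continuation value: it suffices
to solve `w = S (g + P w) - λ`, where `S f x = min (f x) (⨅ ξ : U, k x ξ + f ξ)`
(`stopOp_eq_min_iInf` converts a solution of this equation into one of the Bellman equation).

The operator `S` is monotone and commutes with adding constants, so it does not increase the
oscillation of a difference of two functions (`stopOp_osc`). The Doeblin condition, through the
layer-cake formula, says that `P` contracts the oscillation by the factor `Λ` (`kernel_osc`).
Hence `w ↦ S (g + P w)` contracts the oscillation, and normalising the value at a
base point `x₀` to be zero turns this into geometric convergence of the iterates in the sup norm.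
The limit is a fixed point of the normalised map, and `λ` is the value that was subtracted at `x₀`.
-/

open MeasureTheory Set Filter

/-- The single-impulse operator: either keep the value `f x`, or pay `k x ξ` to move to the best
`ξ ∈ U` and receive `f ξ`. -/
noncomputable def stopOp {E : Type*} (U : Set E) (k : E → E → ℝ) (f : E → ℝ) (x : E) : ℝ :=
  min (f x) (⨅ ξ : U, (k x ξ + f ξ))

lemma bddBelow_impulse {E : Type*} {U : Set E} {k : E → E → ℝ} {f : E → ℝ}
    (hk : ∀ x, ∀ ξ ∈ U, 0 ≤ k x ξ) {C : ℝ} (hf : ∀ x, -C ≤ f x) (x : E) :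
    BddBelow (Set.range fun ξ : U => k x ξ + f ξ) := by
  refine ⟨-C, ?_⟩
  rintro _ ⟨ξ, rfl⟩
  have h1 := hk x ξ ξ.2
  have h2 := hf ξ
  show -C ≤ k x ξ + f ξ
  linarith

/-- Monotonicity of `stopOp` together with its equivariance under adding constants. -/
lemma stopOp_le_add {E : Type*} {U : Set E} (hU : U.Nonempty) {k : E → E → ℝ} {f₁ f₂ : E → ℝ}
    (hk : ∀ x, ∀ ξ ∈ U, 0 ≤ k x ξ) {C : ℝ} (hf : ∀ x, -C ≤ f₁ x) {r : ℝ}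
    (h12 : ∀ x, f₁ x ≤ f₂ x + r) (x : E) :
    stopOp U k f₁ x ≤ stopOp U k f₂ x + r := by
  have : Nonempty U := hU.to_subtype
  unfold stopOp
  rw [← min_add_add_right]
  refine min_le_min (h12 x) ?_
  rw [← sub_le_iff_le_add]
  refine le_ciInf fun ξ => ?_
  have h1 := ciInf_le (bddBelow_impulse hk hf x) ξ
  have h2 := h12 ξ
  linarith

lemma stopOp_osc {E : Type*} {U : Set E} (hU : U.Nonempty) {k : E → E → ℝ} {f₁ f₂ : E → ℝ}
    (hk : ∀ x, ∀ ξ ∈ U, 0 ≤ k x ξ) {C₁ C₂ : ℝ} (hf₁ : ∀ x, -C₁ ≤ f₁ x) (hf₂ : ∀ x, -C₂ ≤ f₂ x)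
    {m s : ℝ} (h12 : ∀ x, m ≤ f₁ x - f₂ x ∧ f₁ x - f₂ x ≤ m + s) (x : E) :
    m ≤ stopOp U k f₁ x - stopOp U k f₂ x ∧
      stopOp U k f₁ x - stopOp U k f₂ x ≤ m + s := by
  have h1 := stopOp_le_add hU hk hf₁ (f₂ := f₂) (r := m + s)
    (fun y => by linarith [(h12 y).2]) x
  have h2 := stopOp_le_add hU hk hf₂ (f₂ := f₁) (r := -m)
    (fun y => by linarith [(h12 y).1]) x
  constructor <;> linarith

lemma stopOp_continuous {E : Type*} [TopologicalSpace E] {U : Set E} (hUc : IsCompact U)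
    {k : E → E → ℝ} (hk : Continuous fun p : E × E => k p.1 p.2) {f : E → ℝ} (hf : Continuous f) :
    Continuous (stopOp U k f) := by
  have h1 : Continuous fun x => sInf ((fun ξ => k x ξ + f ξ) '' U) :=
    hUc.continuous_sInf (f := fun x ξ => k x ξ + f ξ)
      (by show Continuous fun p : E × E => k p.1 p.2 + f p.2; fun_prop)
  have h2 : stopOp U k f = fun x => min (f x) (sInf ((fun ξ => k x ξ + f ξ) '' U)) := by
    funext x
    unfold stopOp
    rw [sInf_image']
  rw [h2]
  exact hf.min h1

lemma stopOp_bounded {E : Type*} {U : Set E} (hU : U.Nonempty) {k : E → E → ℝ} {f : E → ℝ}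
    (hk : ∀ x, ∀ ξ ∈ U, 0 ≤ k x ξ) {C : ℝ} (hf : ∀ x, |f x| ≤ C) (x : E) :
    |stopOp U k f x| ≤ C := by
  have : Nonempty U := hU.to_subtype
  rw [abs_le]
  refine ⟨le_min (abs_le.1 (hf x)).1 (le_ciInf fun ξ => ?_),
    (min_le_left _ _).trans (abs_le.1 (hf x)).2⟩
  have := hk x ξ ξ.2
  linarith [(abs_le.1 (hf ξ)).1]

/-- After an optimal single impulse a further impulse brings no gain: this is where the triangle
inequality for the costs enters. -/
lemma stopOp_eq_min_iInf {E : Type*} {U : Set E} (hU : U.Nonempty) {k : E → E → ℝ} {f : E → ℝ}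
    (hk : ∀ x, ∀ ξ ∈ U, 0 ≤ k x ξ)
    (htri : ∀ x : E, ∀ ξ ∈ U, ∀ η ∈ U, k x ξ ≤ k x η + k η ξ)
    {C : ℝ} (hf : ∀ x, |f x| ≤ C) (x : E) :
    stopOp U k f x = min (f x) (⨅ ξ : U, (k x ξ + stopOp U k f ξ)) := by
  have : Nonempty U := hU.to_subtype
  have hfl : ∀ x, -C ≤ f x := fun x => (abs_le.1 (hf x)).1
  have hSl : ∀ x, -C ≤ stopOp U k f x := fun x => (abs_le.1 (stopOp_bounded hU hk hf x)).1
  apply le_antisymm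
  · refine le_min (min_le_left _ _) (le_ciInf fun ξ => ?_)
    refine (min_le_right _ _).trans ?_
    rw [← sub_le_iff_le_add']
    refine le_min ?_ (le_ciInf fun η => ?_)
    · linarith [ciInf_le (bddBelow_impulse hk hfl x) ξ]
    · linarith [ciInf_le (bddBelow_impulse hk hfl x) η, htri x η η.2 ξ ξ.2]
  · refine min_le_min le_rfl (le_ciInf fun ξ => ?_)
    refine (ciInf_le (bddBelow_impulse hk hSl x) ξ).trans ?_
    have : stopOp U k f ξ ≤ f ξ := min_le_left _ _
    linarith

/-- By the layer-cake formula, the integrals of a function with values in `[m, m + s]` against two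
probability measures at total variation distance at most `Λ` differ by at most `Λ * s`. -/
lemma integral_sub_le_of_tv {E : Type*} [MeasurableSpace E] (μ ν : Measure E)
    [IsProbabilityMeasure μ] [IsProbabilityMeasure ν] {Λ : ℝ}
    (hd : ∀ A : Set E, MeasurableSet A → |(μ A).toReal - (ν A).toReal| ≤ Λ)
    {u : E → ℝ} (hu : Measurable u) {m s : ℝ} (hs : 0 ≤ s)
    (hb : ∀ x, m ≤ u x ∧ u x ≤ m + s) :
    ∫ y, u y ∂μ - ∫ y, u y ∂ν ≤ Λ * s := by
  have hmeas : Measurable fun y => u y - m := hu.sub_const m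
  have hint : ∀ (ρ : Measure E) [IsProbabilityMeasure ρ], Integrable (fun y => u y - m) ρ := by
    intro ρ _
    refine Integrable.of_bound hmeas.aestronglyMeasurable s (ae_of_all _ fun y => ?_)
    rw [Real.norm_eq_abs, abs_le]
    constructor <;> linarith [(hb y).1, (hb y).2]
  have key : ∀ (ρ : Measure E) [IsProbabilityMeasure ρ],
      ∫ y, u y ∂ρ = m + ∫ t in Set.Ioc 0 s, ρ.real {y | t ≤ u y - m} := by
    intro ρ _
    rw [← (hint ρ).integral_eq_integral_Ioc_meas_le (M := s)
      (ae_of_all _ fun y => by simpa using (hb y).1)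
      (ae_of_all _ fun y => by linarith [(hb y).2])]
    have hu' : Integrable u ρ := by
      have := (hint ρ).add (integrable_const m)
      simpa [Pi.add_def] using this
    rw [integral_sub hu' (integrable_const m)]
    simp
  have hI : ∀ (ρ : Measure E) [IsProbabilityMeasure ρ],
      IntegrableOn (fun t => ρ.real {y | t ≤ u y - m}) (Set.Ioc 0 s) := by
    intro ρ _
    have hanti : Antitone fun t => ρ.real {y | t ≤ u y - m} := fun t t' htt =>
      measureReal_mono (fun y hy => le_trans htt hy)
    exact (hanti.antitoneOn (Set.Icc 0 s)).integrableOn_isCompact isCompact_Icc |>.mono_set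
      Set.Ioc_subset_Icc_self
  rw [key μ, key ν, add_sub_add_left_eq_sub, ← integral_sub (hI μ) (hI ν)]
  calc ∫ t in Set.Ioc 0 s, (μ.real {y | t ≤ u y - m} - ν.real {y | t ≤ u y - m})
      ≤ ∫ _t in Set.Ioc 0 s, Λ := by
        refine integral_mono ((hI μ).sub (hI ν)) (integrable_const _) fun t => ?_
        exact (abs_le.1 (hd _ (measurableSet_le measurable_const hmeas))).2
    _ = Λ * s := by simp [hs, mul_comm]

/-- The Doeblin condition makes the Markov kernel contract oscillations by the factor `Λ`. -/
lemma kernel_osc {E : Type*} [MeasurableSpace E] [Nonempty E]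
    (P : ProbabilityTheory.Kernel E E) [ProbabilityTheory.IsMarkovKernel P] {Λ : ℝ}
    (hDoeblin : ∀ x y : E, ∀ A : Set E, MeasurableSet A →
      |(P x A).toReal - (P y A).toReal| ≤ Λ)
    {u : E → ℝ} (hu : Measurable u) {m s : ℝ} (hs : 0 ≤ s)
    (hb : ∀ x, m ≤ u x ∧ u x ≤ m + s) :
    ∃ m', ∀ x, m' ≤ ∫ y, u y ∂P x ∧ ∫ y, u y ∂P x ≤ m' + Λ * s := by
  have hdiff : ∀ x y, ∫ z, u z ∂P x - ∫ z, u z ∂P y ≤ Λ * s := fun x y =>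
    integral_sub_le_of_tv (P x) (P y) (hDoeblin x y) hu hs hb
  obtain ⟨x₀⟩ := ‹Nonempty E›
  have : Nonempty E := ⟨x₀⟩
  have hbdd : BddBelow (Set.range fun x => ∫ z, u z ∂P x) := by
    refine ⟨∫ z, u z ∂P x₀ - Λ * s, ?_⟩
    rintro _ ⟨x, rfl⟩
    have := hdiff x₀ x
    show _ ≤ ∫ z, u z ∂P x
    linarith
  refine ⟨⨅ x, ∫ z, u z ∂P x, fun x => ⟨ciInf_le hbdd x, ?_⟩⟩
  rw [← sub_le_iff_le_add]
  refine le_ciInf fun y => ?_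
  linarith [hdiff x y]

/-- A self-map `G` of the bounded continuous functions which contracts oscillations and whose values
vanish at `x₀` has a fixed point. -/
lemma exists_fixed_of_osc_contraction {E : Type*} [TopologicalSpace E] (x₀ : E)
    (G : BoundedContinuousFunction E ℝ → BoundedContinuousFunction E ℝ) (hG0 : ∀ w, G w x₀ = 0)
    {Λ : ℝ} (h0 : 0 ≤ Λ) (h1 : Λ < 1)
    (hG : ∀ (a b : BoundedContinuousFunction E ℝ) (s : ℝ), 0 ≤ s →
      (∃ m, ∀ x, m ≤ a x - b x ∧ a x - b x ≤ m + s) →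
      ∃ m, ∀ x, m ≤ G a x - G b x ∧ G a x - G b x ≤ m + Λ * s) :
    ∃ w, G w = w := by
  have hosc : ∀ a b : BoundedContinuousFunction E ℝ,
      ∃ m, ∀ x, m ≤ a x - b x ∧ a x - b x ≤ m + 2 * dist a b := by
    intro a b
    refine ⟨-dist a b, fun x => ?_⟩
    have := abs_le.1 ((Real.dist_eq _ _) ▸ BoundedContinuousFunction.dist_coe_le_dist
      (f := a) (g := b) x)
    constructor <;> linarith [this.1, this.2]
  -- A difference vanishing at `x₀` has sup norm at most its oscillation.
  have hdist : ∀ (a b : BoundedContinuousFunction E ℝ) (s : ℝ), 0 ≤ s → a x₀ = 0 → b x₀ = 0 →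
      (∃ m, ∀ x, m ≤ a x - b x ∧ a x - b x ≤ m + s) → dist a b ≤ s := by
    rintro a b s hs ha hb ⟨m, hm⟩
    rw [BoundedContinuousFunction.dist_le hs]
    intro x
    have h2 := hm x₀
    rw [ha, hb] at h2
    rw [Real.dist_eq, abs_le]
    constructor <;> linarith [(hm x).1, (hm x).2, h2.1, h2.2]
  have hcont : Continuous G := by
    refine (LipschitzWith.of_dist_le_mul (K := ⟨Λ * 2, by positivity⟩) fun a b => ?_).continuous
    have := hdist _ _ (Λ * (2 * dist a b)) (by positivity) (hG0 a) (hG0 b)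
      (hG a b _ (by positivity) (hosc a b))
    show _ ≤ Λ * 2 * dist a b
    linarith
  set D := 2 * dist (0 : BoundedContinuousFunction E ℝ) (G 0) with hD
  have hDn : 0 ≤ D := by positivity
  have hiter : ∀ n : ℕ, ∃ m, ∀ x, m ≤ (G^[n] 0) x - (G^[n + 1] 0) x ∧
      (G^[n] 0) x - (G^[n + 1] 0) x ≤ m + D * Λ ^ n := by
    intro n
    induction n with
    | zero => simpa [hD] using hosc 0 (G 0)
    | succ n ih =>
      obtain ⟨m, hm⟩ := hG _ _ _ (by positivity) ih
      refine ⟨m, fun x => ?_⟩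
      have := hm x
      rw [← Function.iterate_succ_apply' G, ← Function.iterate_succ_apply' G] at this
      rwa [pow_succ', mul_left_comm]
  have hz : ∀ n : ℕ, (G^[n] 0) x₀ = 0 := by
    intro n
    cases n with
    | zero => simp
    | succ n => rw [Function.iterate_succ_apply']; exact hG0 _
  have hcauchy : CauchySeq fun n : ℕ => G^[n] 0 :=
    cauchySeq_of_le_geometric Λ D h1 fun n =>
      hdist _ _ _ (by positivity) (hz n) (hz (n + 1)) (hiter n)
  obtain ⟨w, hw⟩ := cauchySeq_tendsto_of_complete hcauchy
  exact ⟨w, isFixedPt_of_tendsto_iterate hw hcont.continuousAt⟩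

theorem stmt1
    {E : Type*} [MetricSpace E] [LocallyCompactSpace E]
    [TopologicalSpace.SeparableSpace E] [MeasurableSpace E] [BorelSpace E]
    (U : Set E) (hUne : U.Nonempty) (hUcomp : IsCompact U)
    (P : ProbabilityTheory.Kernel E E) [ProbabilityTheory.IsMarkovKernel P]
    (hFeller : ∀ f : E → ℝ, Continuous f → (∃ M, ∀ x, |f x| ≤ M) →
      Continuous fun x => ∫ y, f y ∂ P x)
    (Λ : ℝ) (hΛ : Λ ∈ Set.Ioo (0:ℝ) 1)
    (hDoeblin : ∀ x y : E, ∀ A : Set E, MeasurableSet A →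
      |(P x A).toReal - (P y A).toReal| ≤ Λ)
    (g : E → ℝ) (hgc : Continuous g) (hgb : ∃ M, ∀ x, |g x| ≤ M)
    (c : E → E → ℝ) (hcc : Continuous fun p : E × E => c p.1 p.2)
    (hcb : ∃ M, ∀ x ξ, |c x ξ| ≤ M)
    (c₀ : ℝ) (hc₀ : 0 < c₀)
    (hclb : ∀ x : E, ∀ ξ ∈ U, c₀ ≤ c x ξ)
    (hctri : ∀ x : E, ∀ ξ ∈ U, ∀ η ∈ U, c x ξ ≤ c x η + c η ξ)
    (h : ℝ) (hh : 0 < h) :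
    ∃ (w : E → ℝ) (lam : ℝ),
      (∃ C, ∀ x : E, |w x| ≤ C) ∧
      Continuous w ∧
      ∀ x : E,
        w x = min
          (g x - lam + ∫ y, w y ∂ P x)
          (⨅ ξ : U, ((1 / h) * c x ξ + w ξ)) := by
  obtain ⟨x₀, hx₀⟩ := hUne
  have : Nonempty E := ⟨x₀⟩
  obtain ⟨Mg, hMg⟩ := hgb
  set k : E → E → ℝ := fun x ξ => (1 / h) * c x ξ with hkdef
  have hhi : 0 < 1 / h := by positivity
  have hk0 : ∀ x, ∀ ξ ∈ U, 0 ≤ k x ξ := fun x ξ hξ =>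
    mul_nonneg hhi.le (hc₀.le.trans (hclb x ξ hξ))
  have hkc : Continuous fun p : E × E => k p.1 p.2 := hcc.const_mul _
  have hktri : ∀ x : E, ∀ ξ ∈ U, ∀ η ∈ U, k x ξ ≤ k x η + k η ξ := by
    intro x ξ hξ η hη
    rw [hkdef]
    show 1 / h * c x ξ ≤ 1 / h * c x η + 1 / h * c η ξ
    rw [← mul_add]
    exact mul_le_mul_of_nonneg_left (hctri x ξ hξ η hη) hhi.le
  have hwb : ∀ (w : BoundedContinuousFunction E ℝ) x, |w x| ≤ ‖w‖ := fun w x => w.norm_coe_le_norm x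
  have hPb : ∀ (w : BoundedContinuousFunction E ℝ) x, |∫ y, w y ∂P x| ≤ ‖w‖ := by
    intro w x
    have := norm_integral_le_of_norm_le_const (μ := P x) (f := w)
      (ae_of_all _ fun y => w.norm_coe_le_norm y)
    simpa using this
  have hint : ∀ (w : BoundedContinuousFunction E ℝ) x, Integrable w (P x) := fun w x =>
    w.integrable (P x)
  -- The continuation value `g + P w`.
  let f : BoundedContinuousFunction E ℝ → E → ℝ := fun w x => g x + ∫ y, w y ∂P x
  have hfb : ∀ w x, |f w x| ≤ Mg + ‖w‖ := fun w x =>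
    (abs_add_le _ _).trans (add_le_add (hMg x) (hPb w x))
  have hfc : ∀ w, Continuous (f w) := fun w =>
    hgc.add (hFeller w w.continuous ⟨‖w‖, hwb w⟩)
  let F : BoundedContinuousFunction E ℝ → BoundedContinuousFunction E ℝ := fun w =>
    BoundedContinuousFunction.ofNormedAddCommGroup (stopOp U k (f w))
      (stopOp_continuous hUcomp hkc (hfc w)) (Mg + ‖w‖)
      (stopOp_bounded ⟨x₀, hx₀⟩ hk0 (hfb w))
  have hF : ∀ w x, F w x = stopOp U k (f w) x := fun w x => rfl
  let G : BoundedContinuousFunction E ℝ → BoundedContinuousFunction E ℝ := fun w =>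
    F w - BoundedContinuousFunction.const E (F w x₀)
  have hGx : ∀ w x, G w x = F w x - F w x₀ := fun w x => rfl
  obtain ⟨w, hw⟩ := exists_fixed_of_osc_contraction x₀ G (fun w => by rw [hGx, sub_self])
    hΛ.1.le hΛ.2 (by
      rintro a b s hs ⟨m, hm⟩
      obtain ⟨m', hm'⟩ := kernel_osc P hDoeblin (u := fun y => a y - b y)
        (a.continuous.sub b.continuous).measurable hs hm
      refine ⟨m' - F a x₀ + F b x₀, fun x => ?_⟩
      have := stopOp_osc ⟨x₀, hx₀⟩ hk0 (f₁ := f a) (f₂ := f b)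
        (fun y => (abs_le.1 (hfb a y)).1) (fun y => (abs_le.1 (hfb b y)).1)
        (m := m') (s := Λ * s) (fun y => by
          have h3 := hm' y
          rw [integral_sub (hint a y) (hint b y)] at h3
          show m' ≤ (g y + ∫ z, a z ∂P y) - (g y + ∫ z, b z ∂P y) ∧
            (g y + ∫ z, a z ∂P y) - (g y + ∫ z, b z ∂P y) ≤ m' + Λ * s
          constructor <;> linarith [h3.1, h3.2]) x
      rw [hGx, hGx]
      rw [← hF, ← hF] at this
      constructor <;> linarith [this.1, this.2])
  have hwx : ∀ x, stopOp U k (f w) x = w x + F w x₀ := by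
    intro x
    have := congrArg (fun v : BoundedContinuousFunction E ℝ => v x) hw
    simp only [hGx] at this
    rw [← hF]
    linarith
  refine ⟨w, F w x₀, ⟨‖w‖, hwb w⟩, w.continuous, fun x => ?_⟩
  have hmain := stopOp_eq_min_iInf ⟨x₀, hx₀⟩ hk0 hktri (hfb w) x
  simp only [hwx] at hmain
  have : Nonempty U := ⟨⟨x₀, hx₀⟩⟩
  have hinf : (⨅ ξ : U, (k x ξ + (w ξ + F w x₀))) = (⨅ ξ : U, (k x ξ + w ξ)) + F w x₀ := by
    rw [ciInf_add (bddBelow_impulse hk0 (fun y => (abs_le.1 (hwb w y)).1) x)]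
    simp only [add_assoc]
  rw [hinf] at hmain
  rw [eq_sub_of_add_eq hmain, ← min_sub_sub_right, add_sub_cancel_right]
  congr 1
  show g x + ∫ y, w y ∂P x - F w x₀ = _
  ring
end

section
/- Suppose (w, λ), with w : ℕ×E → ℝ bounded measurable and λ : ℕ → ℝ, solves the discounted Bellman equation: for all k ∈ ℕ and x ∈ E, w(k,x) = min( φ(k)·(g(x) − λ(k)) + ∫_E w(k+1,y) P(x,dy), M^d w(k,x) ), where M^d w(k,x) := inf_{ξ∈U} ( φ(k)·(1/h)·c(x,ξ) + w(k,ξ) ). Fix k ∈ ℕ and define z_k(n) := Σ_{i=k}^{n+k−1} φ(i)·(g(X_{i−k}) − λ(i)) + w(k+n, X_n) for n ∈ ℕ. Then the process (z_k(n))_{n∈ℕ} is a submartingale with respect to the filtration (F_n) under ℙ. -/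
/-!
The Bellman equation gives `w k x ≤ φ k * (g x - lam k) + ∫ y, w (k + 1) y ∂P x`, since a minimum is
at most its first argument; the intervention term plays no role in this inequality. In the step from
`n` to `n + 1` the accumulated cost is already `F n`-measurable, so the conditional expectation of
the new value is that cost plus, by the Markov property, `∫ y, w (k + n + 1) y ∂P (X n)`. The
inequality at `x = X n` shows that this dominates the value at time `n`, and
`submartingale_nat` extends the one-step comparison to all pairs of times.
-/

open MeasureTheory Set Filter

theorem stmt2
    {E : Type*} [MetricSpace E] [LocallyCompactSpace E]
    [TopologicalSpace.SeparableSpace E] [MeasurableSpace E] [BorelSpace E]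
    (U : Set E) (hUne : U.Nonempty) (hUcomp : IsCompact U)
    (P : ProbabilityTheory.Kernel E E) [ProbabilityTheory.IsMarkovKernel P]
    (g : E → ℝ) (hgm : Measurable g) (hgb : ∃ M, ∀ x, |g x| ≤ M)
    (c : E → E → ℝ) (hcm : Measurable fun p : E × E => c p.1 p.2)
    (hcb : ∃ M, ∀ x ξ, |c x ξ| ≤ M)
    (φ : ℕ → ℝ) (hφ : ∀ i, φ i ∈ Set.Ioc (0:ℝ) 1)
    (h : ℝ) (hh : 0 < h)
    {Ω : Type*} {m : MeasurableSpace Ω} (μ : Measure Ω) [IsProbabilityMeasure μ]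
    (F : Filtration ℕ m) (X : ℕ → Ω → E) (hX : Adapted F X)
    (hMarkov : ∀ f : E → ℝ, Measurable f → (∃ M, ∀ x, |f x| ≤ M) → ∀ n : ℕ,
      μ[(fun ω => f (X (n + 1) ω)) | F n] =ᵐ[μ] fun ω => ∫ y, f y ∂ P (X n ω))
    (w : ℕ → E → ℝ) (hwm : ∀ k, Measurable (w k))
    (hwb : ∃ C, ∀ (k : ℕ) (x : E), |w k x| ≤ C)
    (lam : ℕ → ℝ)
    (hBellman : ∀ (k : ℕ) (x : E),
      w k x = min (φ k * (g x - lam k) + ∫ y, w (k + 1) y ∂ P x)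
        (⨅ ξ : U, (φ k * ((1 / h) * c x ξ) + w k ξ)))
    (k : ℕ) :
    Submartingale
      (fun n ω => (∑ i ∈ Finset.range n, φ (k + i) * (g (X i ω) - lam (k + i)))
        + w (k + n) (X n ω)) F μ := by
  obtain ⟨G, hG⟩ := hgb
  obtain ⟨C, hC⟩ := hwb
  set S : ℕ → Ω → ℝ := fun n ω =>
    ∑ i ∈ Finset.range n, φ (k + i) * (g (X i ω) - lam (k + i)) with hS
  have hterm : ∀ i n, i ≤ n →
      Measurable[F n] fun ω => φ (k + i) * (g (X i ω) - lam (k + i)) := fun i n hin =>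
    ((hgm.comp ((hX i).mono (F.mono hin) le_rfl)).sub_const _).const_mul _
  -- The running cost is predictable: `S (n + 1)` only involves `X 0, …, X n`.
  have hSpred : ∀ n, Measurable[F n] (S (n + 1)) := fun n =>
    Finset.measurable_fun_sum _ fun i hi => hterm i n (Nat.lt_succ_iff.mp (Finset.mem_range.mp hi))
  have hSmeas : ∀ n, Measurable[F n] (S n) := fun n =>
    Finset.measurable_fun_sum _ fun i hi => hterm i n (Finset.mem_range.mp hi).le
  have hwX : ∀ j n, Measurable[F n] fun ω => w j (X n ω) := fun j n => (hwm j).comp (hX n)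
  have hgint : ∀ i, Integrable (fun ω => g (X i ω)) μ := fun i =>
    Integrable.of_bound ((hgm.comp ((hX i).mono (F.le i) le_rfl)).aestronglyMeasurable) G
      (ae_of_all _ fun ω => hG _)
  have hSint : ∀ n, Integrable (S n) μ := fun n =>
    integrable_finsetSum _ fun i _ => ((hgint i).sub (integrable_const _)).const_mul _
  have hwint : ∀ j n, Integrable (fun ω => w j (X n ω)) μ := fun j n =>
    Integrable.of_bound (((hwX j n).mono (F.le n) le_rfl).aestronglyMeasurable) C
      (ae_of_all _ fun ω => hC _ _)
  refine submartingale_nat (fun n => ((hSmeas n).add (hwX (k + n) n)).stronglyMeasurable)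
    (fun n => (hSint n).add (hwint (k + n) n)) fun n => ?_
  have hadd : μ[(fun ω => S (n + 1) ω + w (k + (n + 1)) (X (n + 1) ω)) | F n] =ᵐ[μ]
      μ[S (n + 1) | F n] + μ[(fun ω => w (k + (n + 1)) (X (n + 1) ω)) | F n] :=
    condExp_add (hSint (n + 1)) (hwint (k + (n + 1)) (n + 1)) (F n)
  have hpred : μ[S (n + 1) | F n] = S (n + 1) :=
    condExp_of_stronglyMeasurable (F.le n) (hSpred n).stronglyMeasurable (hSint (n + 1))
  filter_upwards [hadd, hMarkov (w (k + (n + 1))) (hwm _) ⟨C, hC _⟩ n] with ω h₁ h₂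
  rw [h₁, Pi.add_apply, hpred, h₂]
  have hle : w (k + n) (X n ω) ≤
      φ (k + n) * (g (X n ω) - lam (k + n)) + ∫ y, w (k + (n + 1)) y ∂ P (X n ω) :=
    (hBellman (k + n) (X n ω)).trans_le (min_le_left _ _)
  have hsucc : S (n + 1) ω = S n ω + φ (k + n) * (g (X n ω) - lam (k + n)) :=
    Finset.sum_range_succ _ _
  linarith
end

section
/- There exist a bounded measurable function w : E → ℝ and a constant λ ∈ ℝ solving the one-step Poisson equation associated with the stationary Markov strategy (D, ψ): for every x ∈ D, w(x) = g(x) − λ + ∫_E w(y) P(x,dy), and for every x ∉ D, w(x) = (1/h)·c(x, ψ(x)) + w(ψ(x)). -/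
/-!
Substituting `w = r + u ∘ φ`, where `φ` is the identity on `D` and `ψ` off `D`, and `r` is `0` on `D`
and the intervention cost off `D`, turns the system into the ordinary Poisson equation
`u = G - λ + Q u` for the post-intervention kernel `Q = P.map φ` and `G = g + P r`.
The kernel `Q` inherits the Doeblin condition, so by the layer cake formula
(`abs_integral_sub_integral_le`) it contracts the oscillation of bounded functions by the factor `Λ`.
Hence the functions `d₀ = G - G x₀`, `dₙ₊₁ = Q dₙ - (Q dₙ) x₀`, which vanish at a fixed base point
`x₀`, decay geometrically in sup norm, and `u = ∑ dₙ` solves the Poisson equation with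
`λ = G x₀ + ∑ (Q dₙ) x₀`. Normalizing at `x₀` makes an invariant measure unnecessary.
-/

open MeasureTheory Set Filter

lemma integrable_of_forall_abs_le {E : Type*} [MeasurableSpace E] (μ : Measure E)
    [IsProbabilityMeasure μ] {f : E → ℝ} (hf : Measurable f) {C : ℝ} (hC : ∀ x, |f x| ≤ C) :
    Integrable f μ :=
  Integrable.of_bound hf.aestronglyMeasurable C
    (Eventually.of_forall fun x => by simpa [Real.norm_eq_abs] using hC x)

lemma abs_integral_le_of_forall_abs_le {E : Type*} [MeasurableSpace E] (μ : Measure E)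
    [IsProbabilityMeasure μ] {f : E → ℝ} {C : ℝ} (hC : ∀ x, |f x| ≤ C) :
    |∫ x, f x ∂μ| ≤ C := by
  simpa using norm_integral_le_of_norm_le_const (μ := μ) (f := f) (C := C)
    (Eventually.of_forall fun x => by simpa [Real.norm_eq_abs] using hC x)

/-- If two probability measures are within `Λ` in total variation, then their integrals of a
function of oscillation at most `K` differ by at most `Λ * K`. -/
lemma abs_integral_sub_integral_le {E : Type*} [MeasurableSpace E] (μ ν : Measure E)
    [IsProbabilityMeasure μ] [IsProbabilityMeasure ν] (Λ : ℝ)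
    (hΛ : ∀ A : Set E, MeasurableSet A → |(μ A).toReal - (ν A).toReal| ≤ Λ)
    {f : E → ℝ} (hf : Measurable f) {K : ℝ} (hK : ∀ x y, |f x - f y| ≤ K) :
    |∫ x, f x ∂μ - ∫ x, f x ∂ν| ≤ Λ * K := by
  have : Nonempty E := nonempty_of_isProbabilityMeasure μ
  let x₁ : E := Classical.arbitrary E
  have hK0 : 0 ≤ K := (abs_nonneg _).trans (hK x₁ x₁)
  have hbdd : BddBelow (range f) :=
    ⟨f x₁ - K, by rintro _ ⟨y, rfl⟩; linarith [(abs_le.1 (hK x₁ y)).2]⟩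
  set m := ⨅ x, f x with hm
  have h0 : ∀ x, 0 ≤ f x - m := fun x => sub_nonneg.2 (ciInf_le hbdd x)
  have h1 : ∀ x, f x - m ≤ K := fun x => by
    have : f x - K ≤ m := le_ciInf fun y => by linarith [(abs_le.1 (hK x y)).2]
    linarith
  have habs : ∀ x, |f x - m| ≤ K := fun x => by rw [abs_of_nonneg (h0 x)]; exact h1 x
  have hkm : Measurable fun x => f x - m := hf.sub_const m
  have hfC : ∀ x, |f x| ≤ K + |m| := fun x => by
    have := abs_add_le (f x - m) m
    rw [sub_add_cancel] at this
    linarith [habs x]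
  have shift : ∀ (ρ : Measure E) [IsProbabilityMeasure ρ],
      ∫ x, f x ∂ρ = (∫ t in Ioc 0 K, ρ.real {a | t ≤ f a - m}) + m := by
    intro ρ _
    have e := (integrable_of_forall_abs_le ρ hkm habs).integral_eq_integral_Ioc_meas_le
      (Eventually.of_forall h0) (Eventually.of_forall h1)
    rw [← e, integral_sub (integrable_of_forall_abs_le ρ hf hfC) (integrable_const m)]
    simp
  have hint : ∀ (ρ : Measure E) [IsProbabilityMeasure ρ],
      IntegrableOn (fun t => ρ.real {a | t ≤ f a - m}) (Ioc 0 K) := by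
    intro ρ _
    have anti : Antitone fun t : ℝ => ρ.real {a | t ≤ f a - m} := fun s t hst =>
      measureReal_mono fun a ha => hst.trans ha
    exact (anti.intervalIntegrable (μ := volume) (a := 0) (b := K)).1
  rw [shift μ, shift ν, add_sub_add_right_eq_sub, ← integral_sub (hint μ) (hint ν)]
  have := norm_setIntegral_le_of_norm_le_const (μ := volume) (s := Ioc (0 : ℝ) K) (C := Λ)
    (f := fun t => μ.real {a | t ≤ f a - m} - ν.real {a | t ≤ f a - m})
    measure_Ioc_lt_top (fun t _ => hΛ _ (measurableSet_le measurable_const hkm))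
  simpa [Real.norm_eq_abs, hK0] using this

/-- The Poisson equation `u = G - λ + Q u` has a bounded measurable solution for every Markov kernel
`Q` satisfying the Doeblin condition and every bounded measurable `G`. -/
lemma exists_poisson {E : Type*} [MeasurableSpace E] (Q : ProbabilityTheory.Kernel E E)
    [ProbabilityTheory.IsMarkovKernel Q] (Λ : ℝ) (hΛ : Λ ∈ Set.Ioo (0 : ℝ) 1)
    (hQ : ∀ x y : E, ∀ A : Set E, MeasurableSet A →
      |(Q x A).toReal - (Q y A).toReal| ≤ Λ)
    (x₀ : E) {G : E → ℝ} (hG : Measurable G) {M : ℝ} (hM : ∀ x, |G x| ≤ M) :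
    ∃ (u : E → ℝ) (lam : ℝ), Measurable u ∧ (∃ C, ∀ x, |u x| ≤ C) ∧
      ∀ x, u x = G x - lam + ∫ y, u y ∂Q x := by
  let d : ℕ → E → ℝ := fun n => Nat.rec (fun x => G x - G x₀)
    (fun _ f x => ∫ y, f y ∂Q x - ∫ y, f y ∂Q x₀) n
  have d0 : ∀ x, d 0 x = G x - G x₀ := fun x => rfl
  have dS : ∀ n x, d (n + 1) x = ∫ y, d n y ∂Q x - ∫ y, d n y ∂Q x₀ := fun n x => rfl
  have dm : ∀ n, Measurable (d n) := by
    intro n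
    induction n with
    | zero => exact hG.sub_const _
    | succ n ih => exact (ih.stronglyMeasurable.integral_kernel (κ := Q)).measurable.sub_const _
  have dosc : ∀ n x y, |d n x - d n y| ≤ 2 * M * Λ ^ n := by
    intro n
    induction n with
    | zero =>
      intro x y
      have hx := abs_le.1 (hM x)
      have hy := abs_le.1 (hM y)
      rw [d0, d0, abs_le]
      constructor <;> linarith
    | succ n ih =>
      intro x y
      rw [dS, dS, sub_sub_sub_cancel_right]
      refine (abs_integral_sub_integral_le (Q x) (Q y) Λ (hQ x y) (dm n) ih).trans_eq ?_
      ring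
  -- Vanishing at `x₀` turns the oscillation bound into a sup bound.
  have dx0 : ∀ n, d n x₀ = 0 := by
    intro n
    cases n with
    | zero => rw [d0, sub_self]
    | succ n => rw [dS, sub_self]
  have dbd : ∀ n x, |d n x| ≤ 2 * M * Λ ^ n := fun n x => by
    simpa [dx0 n] using dosc n x x₀
  have hsumb : Summable fun n => 2 * M * Λ ^ n :=
    (summable_geometric_of_lt_one hΛ.1.le hΛ.2).mul_left _
  have hsum : ∀ x, Summable fun n => d n x := fun x => hsumb.of_norm_bounded fun n => dbd n x
  have hsumI : ∀ x, Summable fun n => ∫ y, d n y ∂Q x := fun x =>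
    hsumb.of_norm_bounded fun n => abs_integral_le_of_forall_abs_le (Q x) (dbd n)
  have hint : ∀ x, ∑' n, ∫ y, d n y ∂Q x = ∫ y, ∑' n, d n y ∂Q x := fun x =>
    integral_tsum_of_summable_integral_norm
      (fun n => integrable_of_forall_abs_le (Q x) (dm n) (dbd n))
      (hsumb.of_nonneg_of_le (fun n => integral_nonneg fun y => norm_nonneg _) fun n =>
        (le_abs_self _).trans (abs_integral_le_of_forall_abs_le (Q x)
          fun y => by simpa using dbd n y))
  refine ⟨fun x => ∑' n, d n x, G x₀ + ∑' n, ∫ y, d n y ∂Q x₀, ?_,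
    ⟨∑' n, 2 * M * Λ ^ n, fun x =>
      tsum_of_norm_bounded (f := fun n => d n x) hsumb.hasSum fun n => dbd n x⟩, fun x => ?_⟩
  · exact measurable_of_tendsto_metrizable
      (fun n => Finset.measurable_fun_sum (Finset.range n) fun i _ => dm i)
      (tendsto_pi_nhds.2 fun x => (hsum x).hasSum.tendsto_sum_nat)
  · dsimp only
    rw [← hint x, (hsum x).tsum_eq_zero_add, d0]
    simp only [dS]
    rw [(hsumI x).tsum_sub (hsumI x₀)]
    ring

theorem stmt5
    {E : Type*} [MetricSpace E] [LocallyCompactSpace E]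
    [TopologicalSpace.SeparableSpace E] [MeasurableSpace E] [BorelSpace E]
    (P : ProbabilityTheory.Kernel E E) [ProbabilityTheory.IsMarkovKernel P]
    (Λ : ℝ) (hΛ : Λ ∈ Set.Ioo (0:ℝ) 1)
    (hDoeblin : ∀ x y : E, ∀ A : Set E, MeasurableSet A →
      |(P x A).toReal - (P y A).toReal| ≤ Λ)
    (D : Set E) (hD : MeasurableSet D)
    (ψ : E → E) (hψm : Measurable ψ) (hψb : Bornology.IsBounded (Set.range ψ))
    (hψD : ψ '' Dᶜ ⊆ D)
    (g : E → ℝ) (hgm : Measurable g) (hgb : ∃ M, ∀ x, |g x| ≤ M)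
    (c : E → E → ℝ) (hcm : Measurable fun p : E × E => c p.1 p.2)
    (hcb : ∃ M, ∀ x ξ, |c x ξ| ≤ M)
    (h : ℝ) (hh : 0 < h) :
    ∃ (w : E → ℝ) (lam : ℝ),
      Measurable w ∧
      (∃ C, ∀ x : E, |w x| ≤ C) ∧
      (∀ x ∈ D, w x = g x - lam + ∫ y, w y ∂ P x) ∧
      (∀ x ∉ D, w x = (1 / h) * c x (ψ x) + w (ψ x)) := by
  classical
  rcases isEmpty_or_nonempty E with hE | ⟨⟨x₀⟩⟩
  · exact ⟨fun _ => 0, 0, measurable_const, ⟨0, fun x => isEmptyElim x⟩,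
      fun x => isEmptyElim x, fun x => isEmptyElim x⟩
  obtain ⟨Mg, hMg⟩ := hgb
  obtain ⟨Mc, hMc⟩ := hcb
  -- `φ` performs the immediate intervention and `r` is its cost; both are trivial on `D`.
  let φ : E → E := D.piecewise id ψ
  let r : E → ℝ := D.piecewise (fun _ => 0) (fun x => (1 / h) * c x (ψ x))
  have hφ : Measurable φ := Measurable.piecewise hD measurable_id hψm
  have hr : Measurable r := Measurable.piecewise hD measurable_const
    ((hcm.comp (measurable_id.prodMk hψm)).const_mul _)
  have hφD : ∀ x ∈ D, φ x = x := fun x hx => Set.piecewise_eq_of_mem _ _ _ hx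
  have hφD' : ∀ x ∉ D, φ x = ψ x := fun x hx => Set.piecewise_eq_of_notMem _ _ _ hx
  have hrD : ∀ x ∈ D, r x = 0 := fun x hx => Set.piecewise_eq_of_mem _ _ _ hx
  have hrD' : ∀ x ∉ D, r x = (1 / h) * c x (ψ x) :=
    fun x hx => Set.piecewise_eq_of_notMem _ _ _ hx
  have hMc0 : 0 ≤ Mc := (abs_nonneg _).trans (hMc x₀ x₀)
  have hrb : ∀ x, |r x| ≤ (1 / h) * Mc := by
    intro x
    by_cases hx : x ∈ D
    · rw [hrD x hx, abs_zero]; positivity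
    · rw [hrD' x hx, abs_mul, abs_of_pos (one_div_pos.2 hh)]
      exact mul_le_mul_of_nonneg_left (hMc _ _) (by positivity)
  have : ProbabilityTheory.IsMarkovKernel (P.map φ) :=
    ProbabilityTheory.Kernel.IsMarkovKernel.map P hφ
  obtain ⟨u, lam, hum, ⟨C, hC⟩, hu⟩ := exists_poisson (P.map φ) Λ hΛ
    (fun x y A hA => by
      rw [ProbabilityTheory.Kernel.map_apply' P hφ x hA,
        ProbabilityTheory.Kernel.map_apply' P hφ y hA]
      exact hDoeblin x y _ (hφ hA)) x₀
    (G := fun x => g x + ∫ y, r y ∂P x)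
    (hgm.add (hr.stronglyMeasurable.integral_kernel (κ := P)).measurable)
    (M := Mg + (1 / h) * Mc)
    (fun x => (abs_add_le _ _).trans
      (add_le_add (hMg x) (abs_integral_le_of_forall_abs_le (P x) hrb)))
  have hw : ∀ x, ∫ y, (r y + u (φ y)) ∂P x = ∫ y, r y ∂P x + ∫ y, u y ∂(P.map φ x) := by
    intro x
    rw [ProbabilityTheory.Kernel.map_apply P hφ,
      integral_map hφ.aemeasurable hum.aestronglyMeasurable]
    exact integral_add (integrable_of_forall_abs_le (P x) hr hrb)
      (integrable_of_forall_abs_le (P x) (hum.comp hφ) fun y => hC (φ y))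
  refine ⟨fun x => r x + u (φ x), lam, hr.add (hum.comp hφ),
    ⟨(1 / h) * Mc + C, fun x => (abs_add_le _ _).trans (add_le_add (hrb x) (hC _))⟩,
    fun x hx => ?_, fun x hx => ?_⟩
  · dsimp only
    rw [hw x, hrD x hx, hφD x hx, hu x]
    ring
  · have hψx : ψ x ∈ D := hψD (mem_image_of_mem ψ hx)
    simp only [hrD' x hx, hφD' x hx, hrD _ hψx, hφD _ hψx, zero_add]
end

section
/- The discrete-time discount function φ_h is supermultiplicative: φ_h(i+k) ≥ φ_h(i)·φ_h(k) for all i,k ∈ ℕ. -/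
/-!
Since `β` is nonincreasing, its average over `[k h, (k+1) h]` is at most `β (k h)`, so it suffices
to bound `phih β h i * β (k h)` by `phih β h (i + k)`. Supermultiplicativity of `β` gives
`β s * β (k h) ≤ β (s + k h)`; integrating this over `[i h, (i+1) h]` and translating the variable
by `k h` yields the bound.
-/

open MeasureTheory Set Filter

theorem stmt7
    (β : ℝ → ℝ) (h : ℝ) (hh : 0 < h)
    (hβcont : ContinuousOn β (Set.Ici 0))
    (hβmono : AntitoneOn β (Set.Ici 0))
    (hβval : ∀ t, 0 ≤ t → β t ∈ Set.Ioc (0:ℝ) 1)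
    (hβ0 : β 0 = 1)
    (hβsup : ∀ t s, 0 ≤ t → 0 ≤ s → β t * β s ≤ β (t + s))
    (hβdiv : ¬ IntegrableOn β (Set.Ici 0) volume) :
    ∀ i k : ℕ, phih β h i * phih β h k ≤ phih β h (i + k) := by
  intro i k
  have hint : ∀ a b : ℝ, 0 ≤ a → a ≤ b → IntervalIntegrable β volume a b := by
    intro a b ha hab
    apply ContinuousOn.intervalIntegrable
    rw [uIcc_of_le hab]
    exact hβcont.mono fun x hx => ha.trans hx.1
  have h0 : ∀ n : ℕ, 0 ≤ (n : ℝ) * h := fun n => by positivity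
  have hle : ∀ n : ℕ, (n : ℝ) * h ≤ ((n : ℝ) + 1) * h := fun n => by nlinarith
  have hpos : 0 ≤ phih β h i := by
    unfold phih
    apply mul_nonneg (by positivity)
    exact intervalIntegral.integral_nonneg (hle i) fun u hu => (hβval u ((h0 i).trans hu.1)).1.le
  have hk : phih β h k ≤ β (k * h) := by
    have h1 : ∫ s in ((k : ℝ) * h)..(((k : ℝ) + 1) * h), β s
        ≤ ∫ _ in ((k : ℝ) * h)..(((k : ℝ) + 1) * h), β (k * h) :=
      intervalIntegral.integral_mono_on (hle k) (hint _ _ (h0 k) (hle k)) (by simp)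
        fun x hx => hβmono (h0 k) ((h0 k).trans hx.1) hx.1
    rw [intervalIntegral.integral_const, smul_eq_mul] at h1
    unfold phih
    rw [one_div, inv_mul_le_iff₀ hh]
    linarith
  refine (mul_le_mul_of_nonneg_left hk hpos).trans ?_
  unfold phih
  rw [mul_assoc]
  refine mul_le_mul_of_nonneg_left ?_ (by positivity)
  have hshift : ∫ s in (((i + k : ℕ) : ℝ) * h)..((((i + k : ℕ) : ℝ) + 1) * h), β s
      = ∫ s in ((i : ℝ) * h)..(((i : ℝ) + 1) * h), β (s + k * h) := by
    rw [intervalIntegral.integral_comp_add_right]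
    congr 1 <;> push_cast <;> ring
  rw [hshift, ← intervalIntegral.integral_mul_const]
  refine intervalIntegral.integral_mono_on (hle i) ((hint _ _ (h0 i) (hle i)).mul_const _) ?_
    fun x hx => hβsup _ _ ((h0 i).trans hx.1) (h0 k)
  apply ContinuousOn.intervalIntegrable
  rw [uIcc_of_le (hle i)]
  exact hβcont.comp (by fun_prop) fun x hx => add_nonneg ((h0 i).trans hx.1) (h0 k)
end

section
/- Let κ be a Markov (probability) kernel on a measurable space E satisfying the Doeblin condition with constant Λ ∈ (0,1): |κ(x,A) − κ(y,A)| ≤ Λ for all x,y ∈ E and all measurable sets A. Then for every bounded measurable f : E → ℝ and all x,y ∈ E, ∫_E f(z) κ(x,dz) − ∫_E f(z) κ(y,dz) ≤ Λ·‖f‖_sp, where ‖f‖_sp := sup_{u,v∈E} (f(u) − f(v)). -/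
/-!
Write `m = inf f` and `S = ‖f‖_sp`, so that `0 ≤ f - m ≤ S`. By the layer-cake formula, the integral
of `f - m` against a probability measure `μ` is `∫ t in (0, S], μ {t ≤ f - m}`. Subtracting the
formulas for `κ x` and `κ y`, the integrand is at most `Λ` by the Doeblin condition, so
the difference of the integrals is at most `Λ * S`.
-/

open MeasureTheory Set Filter

/-- Doeblin's bound for a function with values in `[0, S]`, by the layer-cake formula. -/
lemma integral_sub_le_of_measure_sub_le {E : Type*} [MeasurableSpace E] (μ ν : Measure E)
    [IsProbabilityMeasure μ] [IsProbabilityMeasure ν] (Λ S : ℝ) (hS : 0 ≤ S)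
    (h : ∀ A : Set E, MeasurableSet A → μ.real A - ν.real A ≤ Λ)
    (g : E → ℝ) (hg : Measurable g) (h0 : ∀ z, 0 ≤ g z) (h1 : ∀ z, g z ≤ S) :
    (∫ z, g z ∂μ) - (∫ z, g z ∂ν) ≤ Λ * S := by
  have hint (ρ : Measure E) [IsProbabilityMeasure ρ] : Integrable g ρ :=
    Integrable.of_bound hg.aestronglyMeasurable S
      (.of_forall fun z => by rw [Real.norm_eq_abs, abs_of_nonneg (h0 z)]; exact h1 z)
  have hcake (ρ : Measure E) [IsProbabilityMeasure ρ] :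
      ∫ z, g z ∂ρ = ∫ t in Ioc 0 S, ρ.real {a | t ≤ g a} :=
    (hint ρ).integral_eq_integral_Ioc_meas_le (.of_forall h0) (.of_forall h1)
  have htail (ρ : Measure E) [IsProbabilityMeasure ρ] :
      IntegrableOn (fun t => ρ.real {a | t ≤ g a}) (Ioc 0 S) := by
    have hanti : Antitone fun t => ρ.real {a | t ≤ g a} := fun s t hst =>
      measureReal_mono fun a (ha : t ≤ g a) => hst.trans ha
    exact (hanti.antitoneOn _ |>.integrableOn_isCompact isCompact_Icc).mono_set Ioc_subset_Icc_self
  rw [hcake μ, hcake ν, ← integral_sub (htail μ) (htail ν)]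
  calc _ ≤ ∫ _ in Ioc 0 S, Λ :=
        integral_mono ((htail μ).sub (htail ν)) (integrable_const _)
          fun t => h _ (measurableSet_le measurable_const hg)
    _ = Λ * S := by simp [hS, mul_comm]

theorem stmt9
    {E : Type*} [MeasurableSpace E]
    (κ : ProbabilityTheory.Kernel E E) [ProbabilityTheory.IsMarkovKernel κ]
    (Λ : ℝ) (hΛ : Λ ∈ Set.Ioo (0:ℝ) 1)
    (hDoeblin : ∀ x y : E, ∀ A : Set E, MeasurableSet A →
      |(κ x A).toReal - (κ y A).toReal| ≤ Λ)
    (f : E → ℝ) (hfm : Measurable f) (M : ℝ) (hfb : ∀ x, |f x| ≤ M)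
    (x y : E) :
    (∫ z, f z ∂ κ x) - (∫ z, f z ∂ κ y) ≤ Λ * ⨆ p : E × E, (f p.1 - f p.2) := by
  have hlow : BddBelow (range f) := ⟨-M, by rintro _ ⟨z, rfl⟩; exact (abs_le.1 (hfb z)).1⟩
  have hbdd : BddAbove (range fun p : E × E => f p.1 - f p.2) := by
    refine ⟨2 * M, ?_⟩
    rintro _ ⟨p, rfl⟩
    dsimp only
    linarith [(abs_le.1 (hfb p.1)).2, (abs_le.1 (hfb p.2)).1]
  have hosc (u v : E) : f u - f v ≤ ⨆ p : E × E, (f p.1 - f p.2) := le_ciSup hbdd (u, v)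
  have : Nonempty E := ⟨x⟩
  have hint (w : E) : Integrable f (κ w) :=
    Integrable.of_bound hfm.aestronglyMeasurable M (.of_forall hfb)
  have key := integral_sub_le_of_measure_sub_le (κ x) (κ y) Λ (⨆ p : E × E, (f p.1 - f p.2))
    ((sub_self (f x)).symm.le.trans (hosc x x))
    (fun A hA => (le_abs_self _).trans (hDoeblin x y A hA))
    (fun z => f z - ⨅ w, f w) (hfm.sub_const _)
    (fun z => sub_nonneg.2 (ciInf_le hlow z))
    (fun z => sub_le_comm.1 (le_ciInf fun w => sub_le_comm.1 (hosc z w)))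
  rw [integral_sub (hint x) (integrable_const _), integral_sub (hint y) (integrable_const _)] at key
  simpa using key
end

section
/- Define, for bounded functions v : ℕ×E → ℝ with v(k,·) continuous for each k, the operator F v(k,x) := inf_{ξ∈U∪{x}} ( φ(k)·c̄(x,ξ) + φ(k)·g(ξ) + ∫_E v(k+1,y) P(ξ,dy) ), where c̄(x,ξ) := c(x,ξ)·1_{x≠ξ} (and c̄(x,x) := 0). Then F is a contraction in the uniform span seminorm: for any two such functions v₁, v₂, sup_{k∈ℕ} ‖F v₁(k,·) − F v₂(k,·)‖_sp ≤ Λ · sup_{k∈ℕ} ‖v₁(k,·) − v₂(k,·)‖_sp, where ‖f‖_sp := sup_{x,y∈E} (f(x) − f(y)). -/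
/-!
Evaluating each infimum at a near-minimizer of the other one gives
`F v₁ k x - F v₂ k x ≤ ∫ w dP(ξ) + ε` and `F v₂ k y - F v₁ k y ≤ - ∫ w dP(η) + ε`, where
`w = v₁ (k + 1) - v₂ (k + 1)` and `ξ`, `η` are `ε`-optimal for `(v₂, x)` and `(v₁, y)`: the cost
terms cancel because both operators are compared at the same action. Hence the oscillation of
`F v₁ k - F v₂ k` is at most that of `z ↦ ∫ w dP(z)` (`iInf_sub_iInf_sub_le`). The latter is at most
`Λ` times the oscillation of `w`, by integrating the Doeblin bound over the superlevel sets of `w`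
(`integral_sub_integral_le_mul`).
-/

open MeasureTheory Set Filter
open scoped Classical

/-- If two probability measures differ by at most `Λ` on every measurable set, then integrals of a
function with oscillation at most `D` differ by at most `Λ * D`, by the layer-cake formula. -/
lemma integral_sub_integral_le_mul {E : Type*} [MeasurableSpace E]
    (μ ν : Measure E) [IsProbabilityMeasure μ] [IsProbabilityMeasure ν] {Λ D : ℝ}
    (hμν : ∀ A : Set E, MeasurableSet A → |(μ A).toReal - (ν A).toReal| ≤ Λ)
    {w : E → ℝ} (hw : Measurable w) (hD : ∀ x y, w x - w y ≤ D) :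
    ∫ y, w y ∂μ - ∫ y, w y ∂ν ≤ Λ * D := by
  obtain ⟨z⟩ : Nonempty E := μ.nonempty_of_neZero
  have : Nonempty E := ⟨z⟩
  have hD0 : 0 ≤ D := by simpa using hD z z
  have hbdd : BddBelow (range w) := ⟨w z - D, by rintro _ ⟨y, rfl⟩; linarith [hD z y]⟩
  -- Shift by the infimum, so that `f` takes values in `[0, D]`.
  set a := ⨅ y, w y with ha
  let f : E → ℝ := fun y => w y - a
  have hf0 : ∀ y, 0 ≤ f y := fun y => sub_nonneg.2 (ciInf_le hbdd y)
  have hfD : ∀ y, f y ≤ D := fun y => by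
    have : w y - D ≤ a := le_ciInf fun x => by linarith [hD y x]
    simp only [f]; linarith
  have hfm : Measurable f := hw.sub_const a
  have hfi : ∀ (ρ : Measure E) [IsProbabilityMeasure ρ], Integrable f ρ := fun ρ _ =>
    Integrable.of_bound hfm.aestronglyMeasurable D
      (ae_of_all _ fun y => by rw [Real.norm_of_nonneg (hf0 y)]; exact hfD y)
  have hshift : ∀ (ρ : Measure E) [IsProbabilityMeasure ρ],
      ∫ y, w y ∂ρ = (∫ y, f y ∂ρ) + a := fun ρ _ => by
    have h : (fun y => w y) = fun y => f y + a := by ext y; simp [f]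
    rw [h, integral_add (hfi ρ) (integrable_const a)]
    simp
  have hlayer : ∀ (ρ : Measure E) [IsProbabilityMeasure ρ],
      ∫ y, f y ∂ρ = ∫ t in Ioc 0 D, ρ.real {y | t ≤ f y} := fun ρ _ =>
    (hfi ρ).integral_eq_integral_Ioc_meas_le (ae_of_all _ hf0) (ae_of_all _ hfD)
  have hint : ∀ (ρ : Measure E) [IsProbabilityMeasure ρ],
      IntegrableOn (fun t => ρ.real {y | t ≤ f y}) (Ioc 0 D) := fun ρ _ => by
    have hanti : Antitone fun t => ρ.real {y | t ≤ f y} := fun s t hst =>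
      measureReal_mono fun y (hy : t ≤ f y) => hst.trans hy
    exact (hanti.antitoneOn _ |>.integrableOn_isCompact isCompact_Icc).mono_set Ioc_subset_Icc_self
  rw [hshift μ, hshift ν, hlayer μ, hlayer ν, add_sub_add_right_eq_sub,
    ← integral_sub (hint μ) (hint ν)]
  calc ∫ t in Ioc 0 D, (μ.real {y | t ≤ f y} - ν.real {y | t ≤ f y})
      ≤ ∫ _ in Ioc 0 D, Λ := by
        refine integral_mono ((hint μ).sub (hint ν)) (integrable_const _) fun t => ?_
        exact (le_abs_self _).trans (hμν _ (measurableSet_le measurable_const hfm))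
    _ = Λ * D := by simp [hD0, mul_comm]

/-- Two infima of costs sharing the parts `a` and `b`: the double difference is controlled by the
double difference of the remaining parts `p` and `q`. -/
lemma iInf_sub_iInf_sub_le {ι κ : Type*} [Nonempty ι] [Nonempty κ]
    {a p q : ι → ℝ} {b r s : κ → ℝ} {K : ℝ}
    (h₁ : BddBelow (range fun i => a i + p i)) (h₂ : BddBelow (range fun j => b j + s j))
    (h : ∀ i j, (p i - q i) - (r j - s j) ≤ K) :
    ((⨅ i, (a i + p i)) - ⨅ i, (a i + q i)) - ((⨅ j, (b j + r j)) - ⨅ j, (b j + s j)) ≤ K := by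
  refine le_of_forall_pos_le_add fun ε hε => ?_
  obtain ⟨i, hi⟩ := exists_lt_of_ciInf_lt (lt_add_of_pos_right (⨅ i, (a i + q i)) (half_pos hε))
  obtain ⟨j, hj⟩ := exists_lt_of_ciInf_lt (lt_add_of_pos_right (⨅ j, (b j + r j)) (half_pos hε))
  have hi' := ciInf_le h₁ i
  have hj' := ciInf_le h₂ j
  have := h i j
  linarith

theorem stmt10
    {E : Type*} [MetricSpace E] [LocallyCompactSpace E]
    [TopologicalSpace.SeparableSpace E] [MeasurableSpace E] [BorelSpace E]
    (U : Set E) (hUne : U.Nonempty) (hUcomp : IsCompact U)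
    (P : ProbabilityTheory.Kernel E E) [ProbabilityTheory.IsMarkovKernel P]
    (hFeller : ∀ f : E → ℝ, Continuous f → (∃ M, ∀ x, |f x| ≤ M) →
      Continuous fun x => ∫ y, f y ∂ P x)
    (Λ : ℝ) (hΛ : Λ ∈ Set.Ioo (0:ℝ) 1)
    (hDoeblin : ∀ x y : E, ∀ A : Set E, MeasurableSet A →
      |(P x A).toReal - (P y A).toReal| ≤ Λ)
    (g : E → ℝ) (hgc : Continuous g) (hgb : ∃ M, ∀ x, |g x| ≤ M)
    (c : E → E → ℝ) (hcc : Continuous fun p : E × E => c p.1 p.2)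
    (hcb : ∃ M, ∀ x ξ, |c x ξ| ≤ M)
    (c₀ : ℝ) (hc₀ : 0 < c₀)
    (hclb : ∀ x : E, ∀ ξ ∈ U, c₀ ≤ c x ξ)
    (hctri : ∀ x : E, ∀ ξ ∈ U, ∀ η ∈ U, c x ξ ≤ c x η + c η ξ)
    (φ : ℕ → ℝ) (hφ : ∀ i, φ i ∈ Set.Ioc (0:ℝ) 1)
    (Fop : (ℕ → E → ℝ) → ℕ → E → ℝ)
    (hFop : ∀ (v : ℕ → E → ℝ) (k : ℕ) (x : E),
      Fop v k x = ⨅ ξ : ↥(U ∪ {x}),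
        (φ k * (if x = (ξ : E) then 0 else c x ξ) + φ k * g ξ
          + ∫ y, v (k + 1) y ∂ P ξ))
    (v₁ v₂ : ℕ → E → ℝ)
    (hv₁c : ∀ k, Continuous (v₁ k)) (hv₁b : ∃ C, ∀ (k : ℕ) (x : E), |v₁ k x| ≤ C)
    (hv₂c : ∀ k, Continuous (v₂ k)) (hv₂b : ∃ C, ∀ (k : ℕ) (x : E), |v₂ k x| ≤ C) :
    (⨆ k : ℕ, ⨆ p : E × E,
        ((Fop v₁ k p.1 - Fop v₂ k p.1) - (Fop v₁ k p.2 - Fop v₂ k p.2)))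
      ≤ Λ * ⨆ k : ℕ, ⨆ p : E × E,
        ((v₁ k p.1 - v₂ k p.1) - (v₁ k p.2 - v₂ k p.2)) := by
  obtain ⟨z, hz⟩ := hUne
  have : Nonempty E := ⟨z⟩
  obtain ⟨G, hG⟩ := hgb
  obtain ⟨M, hM⟩ := hcb
  obtain ⟨C₁, hC₁⟩ := hv₁b
  obtain ⟨C₂, hC₂⟩ := hv₂b
  -- The suprema on the right are over bounded families, so they are genuine upper bounds.
  have hw : ∀ (k : ℕ) (p : E × E),
      (v₁ k p.1 - v₂ k p.1) - (v₁ k p.2 - v₂ k p.2) ≤ 2 * (C₁ + C₂) := fun k p => by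
    linarith [abs_le.1 (hC₁ k p.1), abs_le.1 (hC₁ k p.2), abs_le.1 (hC₂ k p.1),
      abs_le.1 (hC₂ k p.2)]
  have hspan : ∀ (k : ℕ) (x y : E), (v₁ k x - v₂ k x) - (v₁ k y - v₂ k y) ≤
      ⨆ k : ℕ, ⨆ p : E × E, ((v₁ k p.1 - v₂ k p.1) - (v₁ k p.2 - v₂ k p.2)) := fun k x y =>
    (le_ciSup (f := fun p : E × E => (v₁ k p.1 - v₂ k p.1) - (v₁ k p.2 - v₂ k p.2))
      ⟨_, forall_mem_range.2 (hw k)⟩ (x, y)).trans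
      (le_ciSup (f := fun k : ℕ => ⨆ p : E × E,
          ((v₁ k p.1 - v₂ k p.1) - (v₁ k p.2 - v₂ k p.2)))
        ⟨_, forall_mem_range.2 fun k => ciSup_le (hw k)⟩ k)
  have hcost : ∀ (k : ℕ) (x ξ : E),
      -(|M| + |G|) ≤ φ k * (if x = ξ then 0 else c x ξ) + φ k * g ξ := fun k x ξ => by
    have hc : -|M| ≤ if x = ξ then 0 else c x ξ := by
      split_ifs
      · simp
      · linarith [abs_le.1 (hM x ξ), le_abs_self M]
    have hg : -|G| ≤ g ξ := by linarith [abs_le.1 (hG ξ), le_abs_self G]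
    have := hφ k
    nlinarith [this.1, this.2, abs_nonneg M, abs_nonneg G]
  have hbdd : ∀ (v : ℕ → E → ℝ) (C : ℝ), (∀ k x, |v k x| ≤ C) → ∀ (k : ℕ) (x : E),
      BddBelow (range fun ξ : ↥(U ∪ {x}) =>
        φ k * (if x = (ξ : E) then 0 else c x ξ) + φ k * g ξ + ∫ y, v (k + 1) y ∂ P ξ) := by
    intro v C hC k x
    refine ⟨-(|M| + |G|) - C, forall_mem_range.2 fun ξ => ?_⟩
    have h := norm_integral_le_of_norm_le_const (μ := P ξ) (f := v (k + 1)) (ae_of_all _ (hC (k + 1)))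
    simp only [probReal_univ, mul_one, Real.norm_eq_abs] at h
    linarith [hcost k x ξ, (abs_le.1 h).1]
  have hint : ∀ (v : ℕ → E → ℝ) (C : ℝ), (∀ k, Continuous (v k)) → (∀ k x, |v k x| ≤ C) →
      ∀ (k : ℕ) (ξ : E), Integrable (v k) (P ξ) := fun v C hc hC k ξ =>
    Integrable.of_bound (hc k).measurable.aestronglyMeasurable C (ae_of_all _ (hC k))
  refine ciSup_le fun k => ciSup_le fun ⟨x, y⟩ => ?_
  have : ∀ x : E, Nonempty ↥(U ∪ {x}) := fun x => ⟨⟨z, Or.inl hz⟩⟩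
  simp only [hFop]
  refine iInf_sub_iInf_sub_le (hbdd v₁ C₁ hC₁ k x) (hbdd v₂ C₂ hC₂ k y) fun ξ η => ?_
  rw [← integral_sub (hint v₁ C₁ hv₁c hC₁ _ _) (hint v₂ C₂ hv₂c hC₂ _ _),
    ← integral_sub (hint v₁ C₁ hv₁c hC₁ _ _) (hint v₂ C₂ hv₂c hC₂ _ _)]
  exact integral_sub_integral_le_mul (P ξ) (P η) (hDoeblin ξ η)
    ((hv₁c (k + 1)).sub (hv₂c (k + 1))).measurable (hspan (k + 1))
end

section
/- Define, for bounded measurable v : E → ℝ, the operator F v(x) := g(x) + ∫_E [ 1_D(z)·v(z) + 1_{Dᶜ}(z)·( (1/h)·c(z,ψ(z)) + v(ψ(z)) ) ] P(x,dz). Then F contracts the span seminorm over D: for any bounded measurable v₁, v₂ : E → ℝ, sup_{x,y∈D} ( (F v₁ − F v₂)(x) − (F v₁ − F v₂)(y) ) ≤ Λ · sup_{x,y∈D} ( (v₁ − v₂)(x) − (v₁ − v₂)(y) ). -/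
/-!
Put `w = v₁ - v₂`. The terms `g` and `c` cancel in `Fop v₁ - Fop v₂`, which leaves
`Fop v₁ x - Fop v₂ x = ∫ u ∂(P x)` with `u = w` on `D` and `u = w ∘ ψ` off `D`. Since `ψ` maps `Dᶜ`
into `D`, every value of `u` is a value of `w` on `D`, so the oscillation of `u` over the whole
space is at most the span of `w` over `D`. It remains to see that the integrals of `u` against two
probability measures at total variation distance at most `Λ` differ by at most `Λ` times the
oscillation of `u`; this is `integral_sub_le_of_osc`, which follows from a Hahn decomposition.
-/

open MeasureTheory Set Filter

/-- Integrals of a function of oscillation at most `K` against two probability measures differ by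
at most `K` times their total variation distance. On the set `s` of a Hahn decomposition the
integrand `u - m` is replaced by its upper bound `K`, and off `s` by its lower bound `0`. -/
lemma integral_sub_le_of_osc {E : Type*} [MeasurableSpace E] (μ ν : Measure E)
    [IsProbabilityMeasure μ] [IsProbabilityMeasure ν] {Λ K : ℝ} (hK : 0 ≤ K)
    (hdist : ∀ A : Set E, MeasurableSet A → |(μ A).toReal - (ν A).toReal| ≤ Λ)
    {u : E → ℝ} (hu : Measurable u) (hub : ∃ C, ∀ x, |u x| ≤ C)
    (hosc : ∀ x y, u x - u y ≤ K) :
    ∫ x, u x ∂μ - ∫ x, u x ∂ν ≤ Λ * K := by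
  obtain ⟨C, hC⟩ := hub
  have hne : Nonempty E := μ.nonempty_of_neZero
  have hbdd : BddBelow (range u) := ⟨-C, by rintro _ ⟨x, rfl⟩; exact (abs_le.1 (hC x)).1⟩
  set m := ⨅ x, u x
  have hm : ∀ x, m ≤ u x := fun x => ciInf_le hbdd x
  have hM : ∀ x, u x ≤ m + K := fun x => by
    have : u x - K ≤ m := le_ciInf fun y => by linarith [hosc x y]
    linarith
  have hint : ∀ (ρ : Measure E) [IsFiniteMeasure ρ], Integrable u ρ := fun ρ _ =>
    Integrable.of_bound hu.aestronglyMeasurable C (Eventually.of_forall hC)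
  obtain ⟨s, hs, hpos, hneg⟩ := hahn_decomposition μ ν
  have hle : ν.restrict s ≤ μ.restrict s := Measure.le_iff.2 fun t ht => by
    rw [Measure.restrict_apply ht, Measure.restrict_apply ht]
    exact hpos _ (ht.inter hs) inter_subset_right
  have hge : μ.restrict sᶜ ≤ ν.restrict sᶜ := Measure.le_iff.2 fun t ht => by
    rw [Measure.restrict_apply ht, Measure.restrict_apply ht]
    exact hneg _ (ht.inter hs.compl) inter_subset_right
  have h1 : ∫ x in s, (m + K - u x) ∂ν ≤ ∫ x in s, (m + K - u x) ∂μ :=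
    integral_mono_measure hle (Eventually.of_forall fun x => sub_nonneg.2 (hM x))
      ((integrable_const _).sub (hint _))
  have h2 : ∫ x in sᶜ, (u x - m) ∂μ ≤ ∫ x in sᶜ, (u x - m) ∂ν :=
    integral_mono_measure hge (Eventually.of_forall fun x => sub_nonneg.2 (hm x))
      ((hint _).sub (integrable_const _))
  rw [integral_sub (integrable_const _) (hint _), integral_sub (integrable_const _) (hint _),
    setIntegral_const, setIntegral_const] at h1
  rw [integral_sub (hint _) (integrable_const _), integral_sub (hint _) (integrable_const _),
    setIntegral_const, setIntegral_const, probReal_compl_eq_one_sub hs,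
    probReal_compl_eq_one_sub hs] at h2
  rw [← integral_add_compl hs (hint μ), ← integral_add_compl hs (hint ν)]
  have h3 : (μ.real s - ν.real s) * K ≤ Λ * K :=
    mul_le_mul_of_nonneg_right (le_of_abs_le (hdist s hs)) hK
  simp only [smul_eq_mul] at h1 h2
  linarith

theorem stmt11
    {E : Type*} [MetricSpace E] [LocallyCompactSpace E]
    [TopologicalSpace.SeparableSpace E] [MeasurableSpace E] [BorelSpace E]
    (P : ProbabilityTheory.Kernel E E) [ProbabilityTheory.IsMarkovKernel P]
    (Λ : ℝ) (hΛ : Λ ∈ Set.Ioo (0:ℝ) 1)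
    (hDoeblin : ∀ x y : E, ∀ A : Set E, MeasurableSet A →
      |(P x A).toReal - (P y A).toReal| ≤ Λ)
    (D : Set E) (hD : MeasurableSet D)
    (ψ : E → E) (hψm : Measurable ψ) (hψb : Bornology.IsBounded (Set.range ψ))
    (hψD : ψ '' Dᶜ ⊆ D)
    (g : E → ℝ) (hgm : Measurable g) (hgb : ∃ M, ∀ x, |g x| ≤ M)
    (c : E → E → ℝ) (hcm : Measurable fun p : E × E => c p.1 p.2)
    (hcb : ∃ M, ∀ x ξ, |c x ξ| ≤ M)
    (h : ℝ) (hh : 0 < h)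
    (Fop : (E → ℝ) → E → ℝ)
    (hFop : ∀ (v : E → ℝ) (x : E),
      Fop v x = g x + ∫ z,
        (D.indicator v z
          + Dᶜ.indicator (fun z' => (1 / h) * c z' (ψ z') + v (ψ z')) z) ∂ P x)
    (v₁ v₂ : E → ℝ)
    (hv₁m : Measurable v₁) (hv₁b : ∃ C, ∀ x, |v₁ x| ≤ C)
    (hv₂m : Measurable v₂) (hv₂b : ∃ C, ∀ x, |v₂ x| ≤ C) :
    (⨆ p : ↥D × ↥D,
        ((Fop v₁ p.1 - Fop v₂ p.1) - (Fop v₁ p.2 - Fop v₂ p.2)))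
      ≤ Λ * ⨆ p : ↥D × ↥D, ((v₁ p.1 - v₂ p.1) - (v₁ p.2 - v₂ p.2)) := by
  classical
  obtain ⟨C₁, hC₁⟩ := hv₁b
  obtain ⟨C₂, hC₂⟩ := hv₂b
  obtain ⟨M, hM⟩ := hcb
  set K := ⨆ p : ↥D × ↥D, ((v₁ p.1 - v₂ p.1) - (v₁ p.2 - v₂ p.2)) with hKdef
  have hbdd : BddAbove (range fun p : ↥D × ↥D =>
      ((v₁ p.1 - v₂ p.1) - (v₁ p.2 - v₂ p.2))) := by
    refine ⟨2 * (C₁ + C₂), ?_⟩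
    rintro _ ⟨⟨a, b⟩, rfl⟩
    have := abs_le.1 (hC₁ a)
    have := abs_le.1 (hC₂ a)
    have := abs_le.1 (hC₁ b)
    have := abs_le.1 (hC₂ b)
    dsimp only
    linarith
  have hKle : ∀ a ∈ D, ∀ b ∈ D, (v₁ a - v₂ a) - (v₁ b - v₂ b) ≤ K := fun a ha b hb =>
    le_ciSup hbdd (⟨a, ha⟩, ⟨b, hb⟩)
  -- The common form of the arguments of `v₁` and `v₂` under the integral sign.
  let φ : E → E := fun z => if z ∈ D then z else ψ z
  have hφm : Measurable φ := Measurable.ite hD measurable_id hψm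
  have hφD : ∀ z, φ z ∈ D := fun z => by
    by_cases hz : z ∈ D
    · simpa [φ, hz] using hz
    · simpa [φ, hz] using hψD ⟨z, hz, rfl⟩
  let k : E → ℝ := Dᶜ.indicator fun z => (1 / h) * c z (ψ z)
  have hkm : Measurable k :=
    ((hcm.comp (measurable_id.prodMk hψm)).const_mul (1 / h)).indicator hD.compl
  have hkb : ∀ z, ‖k z‖ ≤ ‖1 / h‖ * M := fun z =>
    (norm_indicator_le_norm_self _ z).trans <| by
      rw [norm_mul]
      exact mul_le_mul_of_nonneg_left (hM _ _) (norm_nonneg _)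
  have hform : ∀ (v : E → ℝ) z, D.indicator v z
      + Dᶜ.indicator (fun z' => (1 / h) * c z' (ψ z') + v (ψ z')) z = k z + v (φ z) := by
    intro v z
    by_cases hz : z ∈ D <;> simp [k, φ, hz]
  have hki : ∀ x, Integrable k (P x) := fun x =>
    Integrable.of_bound hkm.aestronglyMeasurable _ (Eventually.of_forall hkb)
  have hi₁ : ∀ x, Integrable (fun z => v₁ (φ z)) (P x) := fun x =>
    Integrable.of_bound (hv₁m.comp hφm).aestronglyMeasurable C₁
      (Eventually.of_forall fun z => hC₁ (φ z))
  have hi₂ : ∀ x, Integrable (fun z => v₂ (φ z)) (P x) := fun x =>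
    Integrable.of_bound (hv₂m.comp hφm).aestronglyMeasurable C₂
      (Eventually.of_forall fun z => hC₂ (φ z))
  have hdiff : ∀ x, Fop v₁ x - Fop v₂ x = ∫ z, (v₁ (φ z) - v₂ (φ z)) ∂P x := by
    intro x
    simp only [hFop, hform]
    rw [integral_add (hki x) (hi₁ x), integral_add (hki x) (hi₂ x),
      integral_sub (hi₁ x) (hi₂ x)]
    ring
  rcases isEmpty_or_nonempty D with hDe | ⟨⟨d, hd⟩⟩
  -- Both suprema are over the empty type here, hence zero.
  · simp [K, Real.iSup_of_isEmpty]
  have hK0 : 0 ≤ K := by simpa using hKle d hd d hd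
  have : Nonempty (↥D × ↥D) := ⟨(⟨d, hd⟩, ⟨d, hd⟩)⟩
  refine ciSup_le fun p => ?_
  rw [hdiff, hdiff]
  refine integral_sub_le_of_osc _ _ hK0 (hDoeblin _ _)
    ((hv₁m.comp hφm).sub (hv₂m.comp hφm)) ⟨C₁ + C₂, fun z => ?_⟩
    fun z z' => hKle _ (hφD z) _ (hφD z')
  exact (abs_sub _ _).trans (add_le_add (hC₁ _) (hC₂ _))
end

section
/- For every t ≥ 0 and h > 0, one has 0 ≤ β(t) − (1/h)·∫_t^{t+h} β(s) ds ≤ β(t)·(1 − β(h)). -/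
open MeasureTheory Set Filter

theorem stmt12
    (β : ℝ → ℝ)
    (hβcont : ContinuousOn β (Set.Ici 0))
    (hβmono : AntitoneOn β (Set.Ici 0))
    (hβval : ∀ t, 0 ≤ t → β t ∈ Set.Ioc (0:ℝ) 1)
    (hβ0 : β 0 = 1)
    (hβsup : ∀ t s, 0 ≤ t → 0 ≤ s → β t * β s ≤ β (t + s))
    (hβdiv : ¬ IntegrableOn β (Set.Ici 0) volume)
    (t h : ℝ) (ht : 0 ≤ t) (hh : 0 < h) :
    0 ≤ β t - (1 / h) * ∫ s in t..(t + h), β s ∧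
    β t - (1 / h) * ∫ s in t..(t + h), β s ≤ β t * (1 - β h) := by
  -- Monotonicity squeezes the mean of `β` over `[t, t + h]` between `β (t + h)` and `β t`;
  -- supermultiplicativity then bounds `β (t + h)` below by `β t * β h`.
  have hle : t ≤ t + h := by linarith
  have hint : IntervalIntegrable β volume t (t + h) := by
    apply ContinuousOn.intervalIntegrable_of_Icc hle
    exact hβcont.mono fun x hx => ht.trans hx.1
  have hup : ∫ s in t..(t + h), β s ≤ ∫ _ in t..(t + h), β t :=
    intervalIntegral.integral_mono_on hle hint intervalIntegrable_const
      fun x hx => hβmono ht (ht.trans hx.1) hx.1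
  have hlo : ∫ _ in t..(t + h), β (t + h) ≤ ∫ s in t..(t + h), β s :=
    intervalIntegral.integral_mono_on hle intervalIntegrable_const hint
      fun x hx => hβmono (ht.trans hx.1) (ht.trans hle) hx.2
  simp only [intervalIntegral.integral_const, smul_eq_mul, add_sub_cancel_left] at hup hlo
  have h1 : (1 / h) * ∫ s in t..(t + h), β s ≤ β t := by
    rw [one_div_mul_eq_div, div_le_iff₀ hh]
    linarith
  have h2 : β (t + h) ≤ (1 / h) * ∫ s in t..(t + h), β s := by
    rw [one_div_mul_eq_div, le_div_iff₀ hh]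
    linarith
  have h3 := hβsup t h ht hh.le
  constructor <;> linarith
end
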